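/- arXiv:1008.2924 — 3 statements merged into one kernel-verified Lean document; each statement's English description precedes it below -/
import Mathlib

section
/- Let S = K[x_1,...,x_n] be a polynomial ring over a field K, let S' = K[x_1,...,x_r] and S'' = K[x_{r+1},...,x_n] with 1 < r < n, and let I ⊆ S' and J ⊆ S'' be monomial ideals. Then depth_S(IS ∩ JS) = depth_{S'}(I) + depth_{S''}(J). -/
open MvPolynomial

/-- The depth of a module `M` with respect to an ideal `I`: the supremum of
lengths of `M`-regular sequences with entries in `I`. -/
noncomputable def moduleDepth (R : Type*) [CommRing R] (I : Ideal R)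
    (M : Type*) [AddCommGroup M] [Module R M] : ℕ :=
  sSup {k | ∃ rs : List R, rs.length = k ∧ (∀ r ∈ rs, r ∈ I) ∧
    RingTheory.Sequence.IsRegular M rs}

/-- The Stanley space `u·K[Z]`: the `K`-span of all monomials `u·v` with
`v` a monomial in the variables of `Z`. -/
noncomputable def stanleySpace {n : ℕ} (K : Type*) [Field K] (d : Fin n →₀ ℕ)
    (Z : Finset (Fin n)) : Submodule K (MvPolynomial (Fin n) K) :=
  Submodule.span K {f | ∃ e : Fin n →₀ ℕ, (∀ i, e i ≠ 0 → i ∈ Z) ∧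
    f = monomial (d + e) (1 : K)}

/-- A Stanley decomposition of a monomial ideal `I`: a finite family of Stanley
spaces `uᵢ·K[Zᵢ]`, with each `uᵢ ∈ I`, which are independent and whose (direct)
sum is `I` as a `K`-vector space. -/
structure StanleyDecomp {n : ℕ} (K : Type*) [Field K]
    (I : Ideal (MvPolynomial (Fin n) K)) where
  m : ℕ
  u : Fin m → (Fin n →₀ ℕ)
  Z : Fin m → Finset (Fin n)
  mem : ∀ i, monomial (u i) (1 : K) ∈ I
  indep : iSupIndep fun i => stanleySpace K (u i) (Z i)
  total : (⨆ i, stanleySpace K (u i) (Z i)) = Submodule.restrictScalars K I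

/-- The Stanley depth of a monomial ideal: the largest `k` such that `I` admits a
Stanley decomposition all of whose Stanley spaces use at least `k` variables. -/
noncomputable def sdepth {n : ℕ} {K : Type*} [Field K]
    (I : Ideal (MvPolynomial (Fin n) K)) : ℕ :=
  sSup {k | ∃ D : StanleyDecomp K I, ∀ i, k ≤ (D.Z i).card}

/-- `I` is a monomial ideal if it is generated by monomials. -/
def IsMonomialIdeal {n : ℕ} {K : Type*} [Field K]
    (I : Ideal (MvPolynomial (Fin n) K)) : Prop :=
  ∃ G : Set (Fin n →₀ ℕ), I = Ideal.span ((fun d => monomial d (1 : K)) '' G)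

/-- The monomial prime ideal generated by the variables in `A`. -/
noncomputable def varIdeal {n : ℕ} (K : Type*) [Field K] (A : Finset (Fin n)) :
    Ideal (MvPolynomial (Fin n) K) :=
  Ideal.span ((fun i => (X i : MvPolynomial (Fin n) K)) '' ↑A)

/-- The graded maximal ideal `(x_1, …, x_n)`. -/
noncomputable def maxIdeal (n : ℕ) (K : Type*) [Field K] :
    Ideal (MvPolynomial (Fin n) K) :=
  varIdeal K Finset.univ

/-!
Over a field, multiplication identifies `I ⊗ J` with `IS ∩ JS`, because `S = S' ⊗ S''` and the
inclusion of `I` splits linearly. It therefore suffices to show that depth is additive on external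
tensor products `P ⊗ Q`. Take sequences in the two maximal ideals that are maximal regular on `P`
and on `Q`. Their concatenation is regular on `P ⊗ Q` by flatness. Modulo it, `P ⊗ Q` becomes the
tensor product of the two reductions, and if the maximal ideals kill nonzero elements `p` and `q`
of these, then the maximal ideal of `S` kills `p ⊗ q ≠ 0`. So the concatenation is again maximal,
and by Rees' theorem (vanishing of `Ext` below the length of a regular sequence) every maximal
regular sequence computes the depth.
-/

universe u

open CategoryTheory Abelian RingTheory.Sequence TensorProduct Submodule

section MaximalRegularSequence

variable {R : Type u} [CommRing R] {m : Ideal R} {M : Type*} [AddCommGroup M] [Module R M]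

/-- A weakly `M`-regular sequence in `m` that cannot be prolonged inside `m`. Over a Noetherian ring
and for `M` finite, maximality means that `m` kills a nonzero element of `M ⧸ (rs) M`; this is the
form in which it is recorded, since it passes to tensor products. It also forces
`(rs) M ≠ M`, so such a sequence is regular. -/
structure IsMaximalRegular (m : Ideal R) (M : Type*) [AddCommGroup M] [Module R M]
    (rs : List R) : Prop extends IsWeaklyRegular M rs where
  mem : ∀ r ∈ rs, r ∈ m
  socle_ne_bot : torsionBySet R (M ⧸ (Ideal.ofList rs • ⊤ : Submodule R M)) m ≠ ⊥

theorem subsingleton_quotient_linearMap_iff :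
    Subsingleton ((R ⧸ m) →ₗ[R] M) ↔ torsionBySet R M m = ⊥ := by
  refine ⟨fun h ↦ (Submodule.eq_bot_iff _).2 fun u hu ↦ ?_, fun h ↦ ⟨fun f g ↦ ?_⟩⟩
  · let f : (R ⧸ m) →ₗ[R] M := m.liftQ (LinearMap.toSpanSingleton R M u) fun x hx ↦ by
      simpa using (mem_torsionBySet_iff _ u).1 hu ⟨x, hx⟩
    calc u = f (Submodule.Quotient.mk 1) := by rw [liftQ_apply, LinearMap.toSpanSingleton_apply_one]
      _ = 0 := by rw [Subsingleton.elim f 0, LinearMap.zero_apply]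
  · have apply_one (f : (R ⧸ m) →ₗ[R] M) : f 1 = 0 := by
      rw [← mem_bot R, ← h, mem_torsionBySet_iff]
      rintro ⟨x, hx⟩
      rw [← map_smul, Algebra.smul_def, mul_one, Ideal.Quotient.algebraMap_eq,
        Ideal.Quotient.eq_zero_iff_mem.2 hx, map_zero]
    exact Submodule.linearMap_qext _ (LinearMap.ext_ring ((apply_one f).trans (apply_one g).symm))

theorem exists_mem_isSMulRegular_iff [IsNoetherianRing R] [Module.Finite R M] :
    (∃ x ∈ m, IsSMulRegular M x) ↔ torsionBySet R M m = ⊥ := by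
  rw [← subsingleton_quotient_linearMap_iff, IsSMulRegular.subsingleton_linearMap_iff,
    Ideal.annihilator_quotient]

theorem exists_isMaximalRegular [IsNoetherianRing R] [Module.Finite R M]
    (hm : m • (⊤ : Submodule R M) ≠ ⊤) : ∃ rs, IsMaximalRegular m M rs := by
  obtain ⟨_, ⟨rs, hrs, hmem, rfl⟩, hmax⟩ := (wellFounded_gt (α := Submodule R M)).has_min
    {N | ∃ rs, IsWeaklyRegular M rs ∧ (∀ r ∈ rs, r ∈ m) ∧ Ideal.ofList rs • ⊤ = N}
    ⟨_, [], .nil R M, by simp, rfl⟩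
  refine ⟨rs, hrs, hmem, fun hsocle ↦ ?_⟩
  obtain ⟨x, hx, hreg⟩ := exists_mem_isSMulRegular_iff.2 hsocle
  have hsup : Ideal.ofList (rs ++ [x]) • (⊤ : Submodule R M) =
      Ideal.ofList rs • ⊤ ⊔ Ideal.span {x} • ⊤ := by
    rw [Ideal.ofList_append, Ideal.ofList_singleton, sup_smul]
  have hle : Ideal.span {x} • (⊤ : Submodule R M) ≤ Ideal.ofList rs • ⊤ := by
    rw [← sup_eq_left, ← hsup]
    refine (eq_of_le_of_not_lt (hsup ▸ le_sup_left)
      (hmax _ ⟨rs ++ [x], ?_, by simpa [or_imp, forall_and] using ⟨hmem, hx⟩, rfl⟩)).symm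
    exact (isWeaklyRegular_append_iff ..).2 ⟨hrs, (isWeaklyRegular_singleton_iff ..).2 hreg⟩
  refine hm (top_le_iff.1 ((fun y _ ↦ ?_ : ⊤ ≤ Ideal.ofList rs • ⊤).trans
    (smul_mono_left (Ideal.span_le.2 hmem))))
  rw [← Submodule.Quotient.mk_eq_zero]
  refine hreg.right_eq_zero_of_smul ?_
  rw [← Submodule.Quotient.mk_smul, Submodule.Quotient.mk_eq_zero]
  exact hle (smul_mem_smul (Ideal.mem_span_singleton_self x) mem_top)

theorem subsingleton_linearMap_quotient_of_subsingleton_ext {M : Type u} [AddCommGroup M]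
    [Module R M] (N : Type u) [AddCommGroup N] [Module R N] {rs : List R}
    (hrs : IsWeaklyRegular M rs)
    (hext : ∀ i ≤ rs.length, Subsingleton (Ext (ModuleCat.of R N) (ModuleCat.of R M) i)) :
    Subsingleton (N →ₗ[R] M ⧸ (Ideal.ofList rs • ⊤ : Submodule R M)) := by
  induction rs generalizing M with
  | nil =>
    have : Subsingleton (N →ₗ[R] M) :=
      have := hext 0 le_rfl
      (Ext.addEquiv₀ (X := ModuleCat.of R N) (Y := ModuleCat.of R M) |>.trans
        ModuleCat.homAddEquiv).symm.subsingleton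
    rw [Ideal.ofList_nil, bot_smul]
    exact ((quotEquivOfEqBot (⊥ : Submodule R M) rfl).congrRight (M := N)).toEquiv.subsingleton
  | cons r rs ih =>
    obtain ⟨hr, hrs⟩ := (isWeaklyRegular_cons_iff M r rs).1 hrs
    have hr' : IsSMulRegular (ModuleCat.of R M) r := hr
    have : Subsingleton (N →ₗ[R] QuotSMulTop r M ⧸
        (Ideal.ofList rs • ⊤ : Submodule R (QuotSMulTop r M))) := by
      refine ih hrs fun i hi ↦ ?_
      have ext_zero := AddCommGrpCat.isZero_of_iff_subsingleton.2
        (hext i (hi.trans (by simp)))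
      have ext_succ_zero := AddCommGrpCat.isZero_of_iff_subsingleton.2
        (hext (i + 1) (by simpa using hi))
      exact AddCommGrpCat.subsingleton_of_isZero <| ShortComplex.Exact.isZero_of_both_zeros
        (Ext.covariant_sequence_exact₃' _ hr'.smulShortComplex_shortExact i (i + 1) rfl)
        (ext_zero.eq_zero_of_src _) (ext_succ_zero.eq_zero_of_tgt _)
    exact ((quotOfListConsSMulTopEquivQuotSMulTopInner M r rs).congrRight
      (M := N)).toEquiv.subsingleton

namespace IsMaximalRegular

theorem isRegular {rs : List R} (h : IsMaximalRegular m M rs) : IsRegular M rs where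
  toIsWeaklyRegular := h.toIsWeaklyRegular
  top_ne_smul htop := h.socle_ne_bot <|
    have := Submodule.Quotient.subsingleton_iff.2 htop.symm
    Subsingleton.elim _ _

theorem smul_top_ne_top [Module.Finite R M] {rs : List R} (h : IsMaximalRegular m M rs) :
    m • (⊤ : Submodule R M) ≠ ⊤ := by
  intro htop
  obtain ⟨r, hr, hr_smul⟩ := exists_sub_one_mem_and_smul_eq_zero_of_fg_of_le_smul m
    (⊤ : Submodule R M) Module.Finite.fg_top htop.ge
  refine h.socle_ne_bot ((Submodule.eq_bot_iff _).2 fun u hu ↦ ?_)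
  have hru : r • u = 0 := by
    obtain ⟨y, rfl⟩ := Submodule.Quotient.mk_surjective _ u
    rw [← Submodule.Quotient.mk_smul, hr_smul y mem_top, Submodule.Quotient.mk_zero]
  have : (r - 1) • u = 0 := (mem_torsionBySet_iff _ u).1 hu ⟨r - 1, hr⟩
  simpa [sub_smul, hru] using this

theorem length_le {M : Type u} [AddCommGroup M] [Module R M] [IsNoetherianRing R]
    [Module.Finite R M] {rs ss : List R} (h : IsMaximalRegular m M rs)
    (hss : IsRegular M ss) (hmem : ∀ s ∈ ss, s ∈ m) :
    ss.length ≤ rs.length := by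
  by_contra! hlt
  refine h.socle_ne_bot (subsingleton_quotient_linearMap_iff.1
    (subsingleton_linearMap_quotient_of_subsingleton_ext _ h.toIsWeaklyRegular fun i hi ↦ ?_))
  refine ModuleCat.subsingleton_ext_of_exists_isRegular m (ModuleCat.of R (R ⧸ m)) ?_
    (ModuleCat.of R M) h.smul_top_ne_top.lt_top ss hmem hss i (hi.trans_lt hlt)
  change Module.support R (R ⧸ m) ⊆ _
  rw [Module.support_eq_zeroLocus, Ideal.annihilator_quotient]

theorem moduleDepth_eq {M : Type u} [AddCommGroup M] [Module R M] [IsNoetherianRing R]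
    [Module.Finite R M] {rs : List R} (h : IsMaximalRegular m M rs) :
    moduleDepth R m M = rs.length :=
  IsGreatest.csSup_eq ⟨⟨rs, rfl, h.mem, h.isRegular⟩,
    fun _ ⟨_, hlen, hmem, hss⟩ ↦ hlen ▸ h.length_le hss hmem⟩

end IsMaximalRegular

end MaximalRegularSequence

/-- The third isomorphism theorem for quotients by products with ideals:
`(M ⧸ aM) ⧸ b(M ⧸ aM) ≃ M ⧸ (a + b)M`. -/
noncomputable def quotQuotSMulTopEquiv {R M : Type*} [CommRing R] [AddCommGroup M] [Module R M]
    (a b : Ideal R) :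
    ((M ⧸ (a • ⊤ : Submodule R M)) ⧸ (b • ⊤ : Submodule R (M ⧸ (a • ⊤ : Submodule R M)))) ≃ₗ[R]
      M ⧸ ((a ⊔ b) • ⊤ : Submodule R M) :=
  quotEquivOfEq _ _ (by
      rw [sup_smul, Submodule.map_sup, mkQ_map_self, bot_sup_eq, map_smul'', Submodule.map_top,
        range_mkQ]) ≪≫ₗ
    quotientQuotientEquivQuotient _ _ (smul_mono_left le_sup_left)

section ExternalTensorProduct

variable {K A B S P Q M : Type*} [CommRing K] [CommRing A] [Algebra K A] [CommRing B]
  [Algebra K B] [CommRing S] [Algebra K S] [AddCommGroup P] [Module K P] [Module A P]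
  [AddCommGroup Q] [Module K Q] [Module B Q] [AddCommGroup M] [Module K M] [Module S M]
  {i : A →ₐ[K] S} {j : B →ₐ[K] S}

theorem ideal_map_ofList (f : A →ₐ[K] S) (rs : List A) :
    (Ideal.ofList rs).map f = Ideal.ofList (rs.map f) :=
  Ideal.map_ofList f.toRingHom rs

theorem smul_mem_range_map_subtype [IsScalarTower K A P] {a : Ideal A} {x : A} (hx : x ∈ a)
    (t : P ⊗[K] Q) : x • t ∈ LinearMap.range (TensorProduct.map
      ((a • (⊤ : Submodule A P)).restrictScalars K).subtype (LinearMap.id : Q →ₗ[K] Q)) := by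
  induction t with
  | zero => rw [smul_zero]; exact zero_mem _
  | tmul p q =>
    have hxp : x • p ∈ (a • (⊤ : Submodule A P)).restrictScalars K := by
      rw [restrictScalars_mem]
      exact smul_mem_smul hx mem_top
    exact ⟨⟨x • p, hxp⟩ ⊗ₜ q, rfl⟩
  | add s t hs ht => rw [smul_add]; exact add_mem hs ht

/-- An identification of the `S`-module `M` with the external tensor product of the `A`-module `P`
and the `B`-module `Q`, where `A` and `B` act on `M` through `i` and `j`. No `A ⊗[K] B`-module
structure on `P ⊗[K] Q` is needed to express this: linearity is imposed on pure tensors. -/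
structure ExternalTensorEquiv (i : A →ₐ[K] S) (j : B →ₐ[K] S) (P Q M : Type*)
    [AddCommGroup P] [Module K P] [Module A P] [AddCommGroup Q] [Module K Q] [Module B Q]
    [AddCommGroup M] [Module K M] [Module S M] extends P ⊗[K] Q ≃ₗ[K] M where
  map_smul_tmul_smul (a : A) (b : B) (p : P) (q : Q) :
    toLinearEquiv ((a • p) ⊗ₜ (b • q)) = (i a * j b) • toLinearEquiv (p ⊗ₜ q)

namespace ExternalTensorEquiv

/-- Exchange of the two tensor factors, which reduces statements about `j` to statements
about `i`. -/
def swap (e : ExternalTensorEquiv i j P Q M) : ExternalTensorEquiv j i Q P M where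
  toLinearEquiv := TensorProduct.comm K Q P ≪≫ₗ e.toLinearEquiv
  map_smul_tmul_smul b a q p := by
    simpa [mul_comm] using e.map_smul_tmul_smul a b p q

theorem map_smul_tmul (e : ExternalTensorEquiv i j P Q M) (a : A) (p : P) (q : Q) :
    e.toLinearEquiv ((a • p) ⊗ₜ q) = i a • e.toLinearEquiv (p ⊗ₜ q) := by
  simpa using e.map_smul_tmul_smul a 1 p q

theorem map_smul_left [IsScalarTower K A P] (e : ExternalTensorEquiv i j P Q M) (a : A)
    (t : P ⊗[K] Q) : e.toLinearEquiv (a • t) = i a • e.toLinearEquiv t := by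
  induction t with
  | zero => simp
  | tmul p q => rw [smul_tmul', e.map_smul_tmul]
  | add s t hs ht => rw [smul_add, map_add, hs, ht, map_add, smul_add]

theorem isWeaklyRegular_map [IsScalarTower K A P] [Module.Flat K Q]
    (e : ExternalTensorEquiv i j P Q M) {rs : List A}
    (hrs : IsWeaklyRegular P rs) : IsWeaklyRegular M (rs.map i) := by
  have baseChange : IsWeaklyRegular (P ⊗[A] (A ⊗[K] Q)) rs := hrs.isWeaklyRegular_rTensor
  have tensor : IsWeaklyRegular (P ⊗[K] Q) rs :=
    ((AlgebraTensorModule.cancelBaseChange K A A P Q).isWeaklyRegular_congr rs).1 baseChange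
  refine (AddEquiv.isWeaklyRegular_congr (e := e.toLinearEquiv.toAddEquiv) ?_).1 tensor
  exact List.forall₂_map_right_iff.2 (List.forall₂_same.2 fun r _ ↦ e.map_smul_left r)

theorem map_range_map_subtype [IsScalarTower K A P] [IsScalarTower K S M]
    (e : ExternalTensorEquiv i j P Q M) (a : Ideal A) :
    (LinearMap.range (TensorProduct.map ((a • (⊤ : Submodule A P)).restrictScalars K).subtype
      (LinearMap.id : Q →ₗ[K] Q))).map (e.toLinearEquiv : P ⊗[K] Q →ₗ[K] M) =
    (a.map i • (⊤ : Submodule S M)).restrictScalars K := by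
  refine le_antisymm ?_ fun y hy ↦ ?_
  · rw [range_map_eq_span_tmul, map_span_le]
    rintro _ ⟨⟨p, hp⟩, q, rfl⟩
    rw [restrictScalars_mem] at hp ⊢
    change e.toLinearEquiv (p ⊗ₜ q) ∈ a.map i • (⊤ : Submodule S M)
    refine smul_induction_on hp (fun x hx p _ ↦ ?_) fun p p' hp hp' ↦ ?_
    · rw [e.map_smul_tmul]
      exact smul_mem_smul (Ideal.mem_map_of_mem i hx) mem_top
    · rw [add_tmul, map_add]
      exact add_mem hp hp'
  · rw [restrictScalars_mem] at hy
    refine smul_induction_on hy (fun s hs y _ ↦ ?_) fun _ _ ↦ add_mem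
    induction hs using span_induction generalizing y with
    | mem s hs =>
      obtain ⟨x, hx, rfl⟩ := hs
      obtain ⟨t, rfl⟩ := e.toLinearEquiv.surjective y
      rw [← e.map_smul_left]
      exact mem_map_of_mem (smul_mem_range_map_subtype hx t)
    | zero => rw [zero_smul]; exact zero_mem _
    | add s s' _ _ hs hs' => rw [add_smul]; exact add_mem (hs y mem_top) (hs' y mem_top)
    | smul c s _ hs => rw [smul_eq_mul, mul_comm, mul_smul]; exact hs (c • y) mem_top

/-- Reduction of the first factor modulo an ideal `a` of `A`:
`(P ⧸ aP) ⊗ Q ≃ M ⧸ (aS)M`. -/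
noncomputable def quotientLeft [IsScalarTower K A P] [IsScalarTower K S M]
    (e : ExternalTensorEquiv i j P Q M) (a : Ideal A) :
    ExternalTensorEquiv i j (P ⧸ (a • ⊤ : Submodule A P)) Q
      (M ⧸ (a.map i • ⊤ : Submodule S M)) where
  toLinearEquiv :=
    (Quotient.restrictScalarsEquiv K (a • ⊤ : Submodule A P)).symm.rTensor Q ≪≫ₗ
      quotientTensorEquiv Q _ ≪≫ₗ
      Quotient.equiv _ _ e.toLinearEquiv (e.map_range_map_subtype a) ≪≫ₗ
      Quotient.restrictScalarsEquiv K (a.map i • ⊤ : Submodule S M)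
  map_smul_tmul_smul a b p q := by
    obtain ⟨p, rfl⟩ := Submodule.Quotient.mk_surjective _ p
    exact congrArg Submodule.Quotient.mk (e.map_smul_tmul_smul a b p q)

/-- Transport of an external tensor product decomposition along an `S`-linear isomorphism. -/
def congr {N : Type*} [AddCommGroup N] [Module K N] [Module S N] [IsScalarTower K S M]
    [IsScalarTower K S N] (e : ExternalTensorEquiv i j P Q M) (f : M ≃ₗ[S] N) :
    ExternalTensorEquiv i j P Q N where
  toLinearEquiv := e.toLinearEquiv ≪≫ₗ f.restrictScalars K
  map_smul_tmul_smul a b p q := by simp [e.map_smul_tmul_smul]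

/-- Reduction of both factors modulo ideals: `(P ⧸ aP) ⊗ (Q ⧸ bQ) ≃ M ⧸ (aS + bS)M`. -/
noncomputable def quotient [IsScalarTower K A P] [IsScalarTower K B Q] [IsScalarTower K S M]
    (e : ExternalTensorEquiv i j P Q M) (a : Ideal A) (b : Ideal B) :
    ExternalTensorEquiv i j (P ⧸ (a • ⊤ : Submodule A P)) (Q ⧸ (b • ⊤ : Submodule B Q))
      (M ⧸ ((a.map i ⊔ b.map j) • ⊤ : Submodule S M)) :=
  ((e.quotientLeft a).swap.quotientLeft b).swap.congr (quotQuotSMulTopEquiv _ _)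

end ExternalTensorEquiv

end ExternalTensorProduct

section DepthOfExternalTensorProduct

variable {K A B S P Q M : Type*} [Field K] [CommRing A] [Algebra K A] [CommRing B]
  [Algebra K B] [CommRing S] [Algebra K S] [AddCommGroup P] [Module K P] [Module A P]
  [AddCommGroup Q] [Module K Q] [Module B Q] [AddCommGroup M] [Module K M] [Module S M]
  {i : A →ₐ[K] S} {j : B →ₐ[K] S} {mA : Ideal A} {mB : Ideal B}

theorem tmul_ne_zero_of_ne_zero {p : P} {q : Q} (hp : p ≠ 0) (hq : q ≠ 0) :
    p ⊗ₜ[K] q ≠ 0 := by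
  intro h
  have inj : Function.Injective ((LinearMap.toSpanSingleton K P p).rTensor Q) :=
    Module.Flat.rTensor_preserves_injective_linearMap _
      (LinearMap.ker_eq_bot.1 (LinearMap.ker_toSpanSingleton K hp))
  have : (1 : K) ⊗ₜ[K] q = 0 := inj (by simpa using h)
  exact hq (by simpa using congrArg (TensorProduct.lid K Q) this)

namespace ExternalTensorEquiv

theorem torsionBySet_ne_bot (e : ExternalTensorEquiv i j P Q M)
    (hP : torsionBySet A P mA ≠ ⊥) (hQ : torsionBySet B Q mB ≠ ⊥) :
    torsionBySet S M ↑(mA.map i ⊔ mB.map j) ≠ ⊥ := by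
  obtain ⟨p, hp, hp0⟩ := exists_mem_ne_zero_of_ne_bot hP
  obtain ⟨q, hq, hq0⟩ := exists_mem_ne_zero_of_ne_bot hQ
  have annihilated : mA.map i ⊔ mB.map j ≤ Ideal.torsionOf S M (e.toLinearEquiv (p ⊗ₜ q)) := by
    refine sup_le (Ideal.map_le_iff_le_comap.2 fun a ha ↦ ?_)
      (Ideal.map_le_iff_le_comap.2 fun b hb ↦ ?_)
    · have : a • p = 0 := (mem_torsionBySet_iff _ p).1 hp ⟨a, ha⟩
      rw [Ideal.mem_comap, Ideal.mem_torsionOf_iff]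
      simpa [this] using (e.map_smul_tmul a p q).symm
    · have : b • q = 0 := (mem_torsionBySet_iff _ q).1 hq ⟨b, hb⟩
      rw [Ideal.mem_comap, Ideal.mem_torsionOf_iff]
      simpa [this] using (e.map_smul_tmul_smul 1 b p q).symm
  refine (Submodule.ne_bot_iff _).2 ⟨e.toLinearEquiv (p ⊗ₜ q), ?_, ?_⟩
  · exact (mem_torsionBySet_iff _ _).2 fun s ↦ (Ideal.mem_torsionOf_iff _ _).1 (annihilated s.2)
  · simpa using tmul_ne_zero_of_ne_zero hp0 hq0

theorem isMaximalRegular_append [IsScalarTower K A P] [IsScalarTower K B Q] [IsScalarTower K S M]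
    (e : ExternalTensorEquiv i j P Q M) {rs : List A} {ss : List B}
    (hrs : IsMaximalRegular mA P rs) (hss : IsMaximalRegular mB Q ss) :
    IsMaximalRegular (mA.map i ⊔ mB.map j) M (rs.map i ++ ss.map j) where
  toIsWeaklyRegular := by
    refine (isWeaklyRegular_append_iff ..).2 ⟨e.isWeaklyRegular_map hrs.toIsWeaklyRegular, ?_⟩
    have quot := (e.quotientLeft (Ideal.ofList rs)).swap.isWeaklyRegular_map
      hss.toIsWeaklyRegular
    rwa [ideal_map_ofList] at quot
  mem := by
    simp only [List.mem_append, List.mem_map]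
    rintro _ (⟨r, hr, rfl⟩ | ⟨s, hs, rfl⟩)
    · exact mem_sup_left (Ideal.mem_map_of_mem i (hrs.mem r hr))
    · exact mem_sup_right (Ideal.mem_map_of_mem j (hss.mem s hs))
  socle_ne_bot := by
    have socle := (e.quotient (Ideal.ofList rs) (Ideal.ofList ss)).torsionBySet_ne_bot
      hrs.socle_ne_bot hss.socle_ne_bot
    rwa [ideal_map_ofList, ideal_map_ofList, ← Ideal.ofList_append] at socle

end ExternalTensorEquiv

end DepthOfExternalTensorProduct

theorem ExternalTensorEquiv.moduleDepth_eq_add {K : Type*} {A B S P Q M : Type u} [Field K]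
    [CommRing A] [IsNoetherianRing A] [Algebra K A] [CommRing B] [IsNoetherianRing B]
    [Algebra K B] [CommRing S] [IsNoetherianRing S] [Algebra K S]
    [AddCommGroup P] [Module K P] [Module A P] [IsScalarTower K A P] [Module.Finite A P]
    [AddCommGroup Q] [Module K Q] [Module B Q] [IsScalarTower K B Q] [Module.Finite B Q]
    [AddCommGroup M] [Module K M] [Module S M] [IsScalarTower K S M] [Module.Finite S M]
    {i : A →ₐ[K] S} {j : B →ₐ[K] S} (e : ExternalTensorEquiv i j P Q M)
    {mA : Ideal A} {mB : Ideal B}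
    (hP : mA • (⊤ : Submodule A P) ≠ ⊤) (hQ : mB • (⊤ : Submodule B Q) ≠ ⊤) :
    moduleDepth S (mA.map i ⊔ mB.map j) M = moduleDepth A mA P + moduleDepth B mB Q := by
  obtain ⟨rs, hrs⟩ := exists_isMaximalRegular hP
  obtain ⟨ss, hss⟩ := exists_isMaximalRegular hQ
  rw [hrs.moduleDepth_eq, hss.moduleDepth_eq, (e.isMaximalRegular_append hrs hss).moduleDepth_eq]
  simp only [List.length_append, List.length_map]

section IdealIntersection

theorem range_rTensor_inf_range_lTensor {K P Q A B : Type*} [CommRing K] [AddCommGroup P]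
    [Module K P] [AddCommGroup Q] [Module K Q] [AddCommGroup A] [Module K A] [AddCommGroup B]
    [Module K B] {f : P →ₗ[K] A} {p : A →ₗ[K] P} (hp : p ∘ₗ f = LinearMap.id) (g : Q →ₗ[K] B) :
    (f.rTensor B).range ⊓ (g.lTensor A).range = (TensorProduct.map f g).range := by
  refine le_antisymm ?_ (le_inf ?_ ?_)
  · rintro _ ⟨⟨y, rfl⟩, ⟨z, hz⟩⟩
    refine ⟨p.rTensor Q z, ?_⟩
    calc TensorProduct.map f g (p.rTensor Q z)
        = f.rTensor B (p.rTensor B (g.lTensor A z)) := by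
          simp only [LinearMap.rTensor, LinearMap.lTensor, ← LinearMap.comp_apply,
            ← TensorProduct.map_comp, LinearMap.id_comp, LinearMap.comp_id]
      _ = f.rTensor B y := by
          rw [hz, ← LinearMap.comp_apply (p.rTensor B), ← LinearMap.rTensor_comp, hp,
            LinearMap.rTensor_id, LinearMap.id_apply]
  · rw [← LinearMap.rTensor_comp_lTensor]
    exact LinearMap.range_comp_le_range _ _
  · rw [← LinearMap.lTensor_comp_rTensor]
    exact LinearMap.range_comp_le_range _ _

theorem restrictScalars_map_of_surjective {K A S : Type*} [CommRing K] [CommRing A] [Algebra K A]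
    [CommRing S] [Algebra K S] {f : A →ₐ[K] S} (hf : Function.Surjective f) (I : Ideal A) :
    (I.map f).restrictScalars K = (I.restrictScalars K).map f.toLinearMap :=
  Submodule.ext fun _ ↦ Ideal.mem_map_iff_of_surjective f hf

open Algebra.TensorProduct (productMap productMap_left productMap_right)

variable {K A B S : Type*} [Field K] [CommRing A] [Algebra K A] [CommRing B] [Algebra K B]
  [CommRing S] [Algebra K S] {i : A →ₐ[K] S} {j : B →ₐ[K] S}

theorem range_productMap_comp_map_subtype (h : Function.Bijective (productMap i j)) (I : Ideal A)
    (J : Ideal B) :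
    ((productMap i j).toLinearMap ∘ₗ
      TensorProduct.map (I.restrictScalars K).subtype (J.restrictScalars K).subtype).range =
    (I.map i ⊓ J.map j).restrictScalars K := by
  have hI : (I.map i).restrictScalars K =
      ((I.restrictScalars K).subtype.rTensor B).range.map (productMap i j).toLinearMap := by
    rw [← Ideal.map_includeLeft_eq, ← restrictScalars_map_of_surjective h.2, Ideal.map_mapₐ,
      productMap_left]
  have hJ : (J.map j).restrictScalars K =
      ((J.restrictScalars K).subtype.lTensor A).range.map (productMap i j).toLinearMap := by
    rw [← Ideal.map_includeRight_eq, ← restrictScalars_map_of_surjective h.2, Ideal.map_mapₐ,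
      productMap_right]
  obtain ⟨p, hp⟩ := (I.restrictScalars K).subtype.exists_leftInverse_of_injective (ker_subtype _)
  rw [LinearMap.range_comp, ← range_rTensor_inf_range_lTensor hp,
    Submodule.map_inf (productMap i j).toLinearMap h.1, ← hI, ← hJ]
  rfl

theorem injective_productMap_comp_map_subtype (h : Function.Injective (productMap i j))
    (I : Ideal A) (J : Ideal B) : Function.Injective ((productMap i j).toLinearMap ∘ₗ
      TensorProduct.map (I.restrictScalars K).subtype (J.restrictScalars K).subtype) :=
  h.comp (TensorProduct.map_injective_of_flat_flat (I.restrictScalars K).subtype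
    (J.restrictScalars K).subtype (subtype_injective _) (subtype_injective _))

/-- When `S` is the tensor product of `A` and `B`, multiplication identifies `I ⊗[K] J` with the
intersection of the extensions of `I` and `J` to `S`. -/
noncomputable def externalTensorEquivInf (h : Function.Bijective (productMap i j)) (I : Ideal A)
    (J : Ideal B) : ExternalTensorEquiv i j I J ↥(I.map i ⊓ J.map j) where
  toLinearEquiv :=
    LinearEquiv.ofInjective _ (injective_productMap_comp_map_subtype h.1 I J) ≪≫ₗ
      LinearEquiv.ofEq _ _ (range_productMap_comp_map_subtype h I J)
  map_smul_tmul_smul a b p q := Subtype.ext <| by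
    change i (a * p) * j (b * q) = i a * j b * (i p * j q)
    rw [map_mul, map_mul, mul_mul_mul_comm]

end IdealIntersection

theorem smul_top_ideal_ne_top {R : Type*} [CommRing R] [IsDomain R] [IsNoetherianRing R]
    {m I : Ideal R} (hm : m ≠ ⊤) (hI : I ≠ ⊥) : m • (⊤ : Submodule R I) ≠ ⊤ := by
  intro htop
  obtain ⟨r, hr, hr_smul⟩ := exists_sub_one_mem_and_smul_eq_zero_of_fg_of_le_smul m
    (⊤ : Submodule R I) Module.Finite.fg_top htop.ge
  obtain ⟨x, hx, hx0⟩ := exists_mem_ne_zero_of_ne_bot hI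
  have hrx : r * x = 0 := congrArg Subtype.val (hr_smul ⟨x, hx⟩ mem_top)
  obtain rfl : r = 0 := (mul_eq_zero.1 hrx).resolve_right hx0
  exact hm (m.eq_top_iff_one.2 (by simpa using hr))

section PolynomialRing

variable {K : Type*} [Field K]

theorem maxIdeal_eq_span_range_X (n : ℕ) : maxIdeal n K = Ideal.span (Set.range X) := by
  rw [maxIdeal, varIdeal, Finset.coe_univ, Set.image_univ]

theorem maxIdeal_ne_top (n : ℕ) : maxIdeal n K ≠ ⊤ := by
  have le_ker : maxIdeal n K ≤ RingHom.ker (constantCoeff (σ := Fin n) (R := K)) := by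
    rw [maxIdeal_eq_span_range_X, Ideal.span_le]
    rintro _ ⟨i, rfl⟩
    exact constantCoeff_X K i
  exact ne_top_of_le_ne_top (RingHom.ker_ne_top _) le_ker

theorem maxIdeal_add (r m : ℕ) :
    maxIdeal (r + m) K = (maxIdeal r K).map (rename (Fin.castAdd m) : _ →ₐ[K] _) ⊔
      (maxIdeal m K).map (rename (Fin.natAdd r) : _ →ₐ[K] _) := by
  simp only [maxIdeal_eq_span_range_X, Ideal.map_span, ← Ideal.span_union, ← Set.range_comp]
  congr 1
  ext f
  rw [Set.mem_range, finSumFinEquiv.surjective.exists]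
  simp

theorem bijective_productMap_rename (r m : ℕ) :
    Function.Bijective (Algebra.TensorProduct.productMap
      (rename (Fin.castAdd m) : _ →ₐ[K] _) (rename (Fin.natAdd r) : _ →ₐ[K] _)) := by
  let e := (tensorEquivSum K (Fin r) (Fin m) K).trans (renameEquiv K finSumFinEquiv)
  have productMap_eq : Algebra.TensorProduct.productMap
      (rename (Fin.castAdd m)) (rename (Fin.natAdd r)) = (e : _ →ₐ[K] _) := by
    ext k <;> simp [e]
  rw [productMap_eq]
  exact e.bijective

end PolynomialRing

theorem depth_inter_of_disjoint_vars_general {K : Type*} [Field K] (r m : ℕ)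
    {I : Ideal (MvPolynomial (Fin r) K)} {J : Ideal (MvPolynomial (Fin m) K)}
    (hI : I ≠ ⊥) (hJ : J ≠ ⊥) :
    moduleDepth (MvPolynomial (Fin (r + m)) K) (maxIdeal (r + m) K)
      ↥(Ideal.map (rename (Fin.castAdd m) :
            MvPolynomial (Fin r) K →ₐ[K] MvPolynomial (Fin (r + m)) K) I ⊓
        Ideal.map (rename (Fin.natAdd r) :
            MvPolynomial (Fin m) K →ₐ[K] MvPolynomial (Fin (r + m)) K) J) =
      moduleDepth (MvPolynomial (Fin r) K) (maxIdeal r K) ↥I +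
        moduleDepth (MvPolynomial (Fin m) K) (maxIdeal m K) ↥J := by
  rw [maxIdeal_add]
  exact (externalTensorEquivInf (bijective_productMap_rename r m) I J).moduleDepth_eq_add
    (smul_top_ideal_ne_top (maxIdeal_ne_top r) hI) (smul_top_ideal_ne_top (maxIdeal_ne_top m) hJ)

/-- depth of the intersection of extensions of monomial ideals in
disjoint sets of variables (writing `n = r + m` with `1 < r` and `0 < m`). -/
theorem depth_inter_of_disjoint_vars {K : Type*} [Field K] (r m : ℕ)
    (hr : 1 < r) (hm : 0 < m)
    (I : Ideal (MvPolynomial (Fin r) K)) (J : Ideal (MvPolynomial (Fin m) K))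
    (hImon : IsMonomialIdeal I) (hJmon : IsMonomialIdeal J)
    (hI0 : I ≠ ⊥) (hJ0 : J ≠ ⊥) :
    moduleDepth (MvPolynomial (Fin (r + m)) K) (maxIdeal (r + m) K)
      ↥(Ideal.map (rename (Fin.castAdd m) :
            MvPolynomial (Fin r) K →ₐ[K] MvPolynomial (Fin (r + m)) K) I ⊓
        Ideal.map (rename (Fin.natAdd r) :
            MvPolynomial (Fin m) K →ₐ[K] MvPolynomial (Fin (r + m)) K) J) =
      moduleDepth (MvPolynomial (Fin r) K) (maxIdeal r K) ↥I +
        moduleDepth (MvPolynomial (Fin m) K) (maxIdeal m K) ↥J :=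
  depth_inter_of_disjoint_vars_general r m hI0 hJ0
end

section
/- Let 0 = r_0 < r_1 < ... < r_s = n, S = K[x_1,...,x_n], P_i = (x_{r_{i-1}+1},...,x_{r_i}), and I = P_1 ∩ ... ∩ P_s. Then sdepth_S(I) ≥ Σ_{i=1}^s ⌈(r_i - r_{i-1})/2⌉ ≥ s; in particular sdepth_S(I) ≥ depth_S(I), so Stanley's Conjecture holds for I. -/
open MvPolynomial

/-!
A monomial lies in `I` exactly when its support meets every block. If the family of these supports
is partitioned into intervals `[Z \ U Z, Z ∪ U Z]`, each interval contributes a Stanley space in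
`|Z ∪ U Z|` variables, and together these spaces decompose `I`. Partitions for single blocks
multiply to one for all blocks, so it remains to partition the nonempty subsets of one block `A`
into intervals with tops of size at least `⌈|A| / 2⌉`. Given `Z`, scan `A` from left to right and
let an element be free if its predecessor is neither free nor in `Z`; whether the first element is
free is chosen so that a nonempty `Z` keeps an element that is not free. Every element outside
`Z ∪ U Z` is followed by a free one, except possibly the last, for which the element kept by `Z`
compensates.

For the depth, pick one variable from each block. These variables, together with those outside all
blocks, form a weakly regular sequence on `I`, and the product of the picked variables is a
socle element of the quotient, so by Rees's theorem no regular sequence is longer.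
-/

section IntervalPartition

variable {α ι : Type*} [DecidableEq α]

/-- `U` is an interval partition of the family `F` of finite sets: the intervals are
`[Z \ U Z, Z ∪ U Z]` for `Z ∈ F`, so `U Z` is the set of elements that can be added to or removed
from `Z` freely. A set `W` lies in the interval of `Z` exactly when `W \ U Z = Z \ U Z`, and the
intervals partition `F` because each of them is contained in `F` and `U` is constant on it. -/
def IsIntervalPartition (F : Set (Finset α)) (U : Finset α → Finset α) : Prop :=
  ∀ ⦃Z⦄, Z ∈ F → ∀ ⦃W⦄, W \ U Z = Z \ U Z → W ∈ F ∧ U W = U Z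

lemma IsIntervalPartition.mem_of_sdiff_eq {F : Set (Finset α)} {U : Finset α → Finset α}
    (hU : IsIntervalPartition F U) {Z W : Finset α} (hZ : Z ∈ F) (hZU : Disjoint Z (U Z))
    (hW : W \ U Z = Z) : W ∈ F ∧ W \ U W = Z := by
  obtain ⟨hWF, hUW⟩ := hU hZ (hW.trans (Finset.sdiff_eq_self_of_disjoint hZU).symm)
  exact ⟨hWF, hUW ▸ hW⟩

lemma IsIntervalPartition.exists_sdiff_eq {F : Set (Finset α)} {U : Finset α → Finset α}
    (hU : IsIntervalPartition F U) {W : Finset α} (hW : W ∈ F) :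
    ∃ Z ∈ F, Disjoint Z (U Z) ∧ W \ U Z = Z := by
  obtain ⟨hmem, hUeq⟩ := hU hW (Finset.sdiff_idem W (U W))
  exact ⟨W \ U W, hmem, hUeq.symm ▸ Finset.sdiff_disjoint, by rw [hUeq]⟩

/-- One step of the two-state scan of a list against a set `Z`: an element is free if it is read in
state `true`, and it is read in state `true` if its predecessor is neither free nor in `Z`. -/
def scanStep (Z : Finset α) (s : Bool) (a : α) : Bool :=
  !s && decide (a ∉ Z)

/-- The state in which the scan of a list against `Z`, started in state `s`, ends. -/
def scanEnd (Z : Finset α) (s : Bool) (l : List α) : Bool :=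
  l.foldl (scanStep Z) s

/-- The elements of a list that are free in its scan against `Z` started in state `s`. -/
def scanFree (Z : Finset α) : Bool → List α → Finset α
  | _, [] => ∅
  | s, a :: l => (if s then {a} else ∅) ∪ scanFree Z (scanStep Z s a) l

/-- The initial state for which the scan against a nonempty set `Z` does not end as the scan against
the empty set would. -/
def scanStart (Z : Finset α) (l : List α) : Bool :=
  !(scanEnd Z true l ^^ l.length.bodd)

lemma scanFree_subset (Z : Finset α) (s : Bool) (l : List α) : scanFree Z s l ⊆ l.toFinset := by
  induction l generalizing s with
  | nil => simp [scanFree]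
  | cons a l ih =>
    have := ih (scanStep Z s a)
    cases s <;> simp only [scanFree, List.toFinset_cons] <;> grind

lemma scan_congr {Z W : Finset α} {s : Bool} {l : List α} (hl : l.Nodup)
    (h : ∀ a ∈ l, a ∉ scanFree Z s l → (a ∈ W ↔ a ∈ Z)) :
    scanFree W s l = scanFree Z s l ∧ scanEnd W s l = scanEnd Z s l := by
  induction l generalizing s with
  | nil => exact ⟨rfl, rfl⟩
  | cons a l ih =>
    obtain ⟨ha, hl⟩ := List.nodup_cons.1 hl
    have ha_free : a ∉ scanFree Z (scanStep Z s a) l := fun h' ↦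
      ha (List.mem_toFinset.1 (scanFree_subset _ _ _ h'))
    have hstep : scanStep W s a = scanStep Z s a := by
      cases s
      · simp [scanStep, h a List.mem_cons_self (by simpa [scanFree] using ha_free)]
      · rfl
    have htail := @ih (scanStep Z s a) hl fun b hb hb_free ↦
      h b (List.mem_cons_of_mem a hb) (by cases s <;> simp only [scanFree] <;> grind)
    simp only [scanFree, scanEnd, List.foldl_cons, hstep]
    exact ⟨congrArg _ htail.1, htail.2⟩

lemma scanEnd_empty (s : Bool) (l : List α) : scanEnd ∅ s l = (s ^^ l.length.bodd) := by
  induction l generalizing s with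
  | nil => simp [scanEnd]
  | cons a l ih =>
    have := ih (scanStep ∅ s a)
    simp_all [scanEnd, scanStep, Nat.bodd_succ]

lemma scanEnd_eq_of_mem {Z : Finset α} {l : List α} {a : α} (hal : a ∈ l) (haZ : a ∈ Z)
    (s t : Bool) : scanEnd Z s l = scanEnd Z t l := by
  induction l generalizing s t with
  | nil => simp at hal
  | cons b l ih =>
    simp only [scanEnd, List.foldl_cons]
    by_cases hb : b ∈ Z
    · simp [scanStep, hb]
    · exact ih (by grind) _ _

lemma card_sdiff_scanFree_add_two_mul_card_scanFree {Z : Finset α} {l : List α}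
    (hl : l.Nodup) (s : Bool) :
    ((l.toFinset ∩ Z) \ scanFree Z s l).card + 2 * (scanFree Z s l).card +
      (scanEnd Z s l).toNat = l.length + s.toNat := by
  induction l generalizing s with
  | nil => simp [scanFree, scanEnd]
  | cons a l ih =>
    obtain ⟨ha, hl⟩ := List.nodup_cons.1 hl
    have ha' : a ∉ l.toFinset := by simpa using ha
    have ha_free : a ∉ scanFree Z (scanStep Z s a) l := fun h ↦ ha' (scanFree_subset _ _ _ h)
    have hih := ih hl (scanStep Z s a)
    simp only [scanEnd, List.foldl_cons, List.length_cons, scanFree, List.toFinset_cons] at hih ⊢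
    cases s with
    | true =>
      have hlo : (insert a l.toFinset ∩ Z) \ insert a (scanFree Z false l) =
          (l.toFinset ∩ Z) \ scanFree Z false l := by grind
      simp only [scanStep, Bool.not_true, Bool.false_and, if_true, ← Finset.insert_eq,
        Bool.toNat_true, Bool.toNat_false] at hih ha_free ⊢
      rw [hlo, Finset.card_insert_of_notMem ha_free]
      lia
    | false =>
      by_cases haZ : a ∈ Z
      · have ha_lo : a ∉ (l.toFinset ∩ Z) \ scanFree Z false l := by grind
        simp only [scanStep, haZ, not_true_eq_false, decide_false, Bool.and_false,
          Bool.false_eq_true, if_false, Finset.empty_union, Bool.toNat_false] at hih ha_free ⊢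
        rw [Finset.insert_inter_of_mem haZ, Finset.insert_sdiff_of_notMem _ ha_free,
          Finset.card_insert_of_notMem ha_lo]
        lia
      · simp only [scanStep, haZ, not_false_eq_true, decide_true, Bool.and_true, Bool.not_false,
          Bool.false_eq_true, if_false, Finset.empty_union, Bool.toNat_false, Bool.toNat_true,
          Finset.insert_inter_of_notMem haZ] at hih ⊢
        lia

lemma scanEnd_scanStart_ne {Z : Finset α} {l : List α} {a : α} (hal : a ∈ l) (haZ : a ∈ Z) :
    scanEnd Z (scanStart Z l) l ≠ scanEnd ∅ (scanStart Z l) l := by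
  rw [scanEnd_empty, scanEnd_eq_of_mem hal haZ _ true, scanStart]
  cases scanEnd Z true l <;> cases l.length.bodd <;> decide

-- Otherwise the scan could not tell `Z` from the empty set.
lemma sdiff_scanFree_scanStart_nonempty {Z : Finset α} {l : List α} (hl : l.Nodup)
    (hZ : (l.toFinset ∩ Z).Nonempty) :
    ((l.toFinset ∩ Z) \ scanFree Z (scanStart Z l) l).Nonempty := by
  obtain ⟨a, ha⟩ := hZ
  obtain ⟨hal, haZ⟩ := Finset.mem_inter.1 ha
  by_contra hempty
  refine scanEnd_scanStart_ne (List.mem_toFinset.1 hal) haZ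
    (scan_congr hl fun b hb hb_free ↦ ?_).2.symm
  have : b ∉ Z := fun hbZ ↦ hempty ⟨b, by simp [hb, hbZ, hb_free]⟩
  simpa using this

lemma scanStart_congr {Z W : Finset α} {l : List α} (hl : l.Nodup)
    (hZ : (l.toFinset ∩ Z).Nonempty)
    (h : ∀ a ∈ l, a ∉ scanFree Z (scanStart Z l) l → (a ∈ W ↔ a ∈ Z)) :
    (l.toFinset ∩ W).Nonempty ∧ scanStart W l = scanStart Z l := by
  obtain ⟨a, ha⟩ := sdiff_scanFree_scanStart_nonempty hl hZ
  obtain ⟨⟨hal, haZ⟩, ha_free⟩ : (a ∈ l ∧ a ∈ Z) ∧ a ∉ scanFree Z (scanStart Z l) l := by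
    simpa using ha
  have haW := (h a hal ha_free).2 haZ
  refine ⟨⟨a, by simp [hal, haW]⟩, ?_⟩
  rw [scanStart, scanEnd_eq_of_mem hal haW _ (scanStart Z l), (scan_congr hl h).2,
    scanEnd_eq_of_mem hal haZ _ true, ← scanStart]

lemma half_length_le_card_union_scanFree {Z : Finset α} {l : List α} (hl : l.Nodup)
    (hZ : (l.toFinset ∩ Z).Nonempty) :
    (l.length + 1) / 2 ≤ ((l.toFinset ∩ Z) ∪ scanFree Z (scanStart Z l) l).card := by
  have hcount := card_sdiff_scanFree_add_two_mul_card_scanFree (Z := Z) hl (scanStart Z l)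
  have hpos := (sdiff_scanFree_scanStart_nonempty hl hZ).card_pos
  have hend := Bool.toNat_le (scanEnd Z (scanStart Z l) l)
  rw [← Finset.card_sdiff_add_card]
  lia

theorem exists_isIntervalPartition_nonempty_subsets (A : Finset α) :
    ∃ U : Finset α → Finset α, IsIntervalPartition {Z | Z ⊆ A ∧ Z.Nonempty} U ∧
      (∀ Z, U Z ⊆ A) ∧ ∀ Z ⊆ A, Z.Nonempty → (A.card + 1) / 2 ≤ (Z ∪ U Z).card := by
  have hinter {Z : Finset α} (hZ : Z ⊆ A) : A.toList.toFinset ∩ Z = Z := by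
    rw [A.toList_toFinset, Finset.inter_eq_right.2 hZ]
  have hUA (Z : Finset α) : scanFree Z (scanStart Z A.toList) A.toList ⊆ A := by
    simpa using scanFree_subset Z (scanStart Z A.toList) A.toList
  refine ⟨fun Z ↦ scanFree Z (scanStart Z A.toList) A.toList, ?_, hUA, fun Z hZA hZ ↦ ?_⟩
  · rintro Z ⟨hZA, hZ⟩ W hWZ
    have hagree : ∀ a, a ∉ scanFree Z (scanStart Z A.toList) A.toList → (a ∈ W ↔ a ∈ Z) :=
      fun a ha ↦ by simpa [ha] using Finset.ext_iff.1 hWZ a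
    have hWA : W ⊆ A := fun a haW ↦ by
      by_contra haA
      exact haA (hZA ((hagree a fun h ↦ haA (hUA Z h)).1 haW))
    obtain ⟨hW, hstart⟩ := scanStart_congr A.nodup_toList (by rwa [hinter hZA])
      fun a _ ↦ hagree a
    refine ⟨⟨hWA, by rwa [hinter hWA] at hW⟩, ?_⟩
    simpa only [hstart] using (scan_congr A.nodup_toList fun a _ ↦ hagree a).1
  · have hcard := half_length_le_card_union_scanFree A.nodup_toList (by rwa [hinter hZA])
    rwa [hinter hZA, A.length_toList] at hcard

section Product

variable {T : Finset ι} {A : ι → Finset α} {F : ι → Set (Finset α)}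
  {U : ι → Finset α → Finset α} {N : Finset α}

/-- The interval partition obtained by applying `U i` on each block `A i` and letting the elements
of `N` be free. -/
def blockwiseFree (T : Finset ι) (A : ι → Finset α) (U : ι → Finset α → Finset α)
    (N Z : Finset α) : Finset α :=
  T.biUnion (fun i ↦ U i (A i ∩ Z)) ∪ N

lemma inter_blockwiseFree (hA : (T : Set ι).PairwiseDisjoint A) (hN : ∀ i ∈ T, Disjoint (A i) N)
    (hUA : ∀ i Z, U i Z ⊆ A i) {i : ι} (hi : i ∈ T) (Z : Finset α) :
    A i ∩ blockwiseFree T A U N Z = U i (A i ∩ Z) := by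
  ext a
  simp only [blockwiseFree, Finset.mem_inter, Finset.mem_union, Finset.mem_biUnion]
  constructor
  · rintro ⟨hai, ⟨j, hj, haj⟩ | haN⟩
    · exact hA.elim_finset hi hj a hai (hUA j _ haj) ▸ haj
    · exact (Finset.disjoint_left.1 (hN i hi) hai haN).elim
  · exact fun ha ↦ ⟨hUA i _ ha, Or.inl ⟨i, hi, ha⟩⟩

lemma isIntervalPartition_blockwiseFree (hA : (T : Set ι).PairwiseDisjoint A)
    (hN : ∀ i ∈ T, Disjoint (A i) N) (hUA : ∀ i Z, U i Z ⊆ A i)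
    (hU : ∀ i ∈ T, IsIntervalPartition (F i) (U i)) :
    IsIntervalPartition {Z | ∀ i ∈ T, A i ∩ Z ∈ F i} (blockwiseFree T A U N) := by
  intro Z hZ W hWZ
  have hblock : ∀ i ∈ T, A i ∩ W ∈ F i ∧ U i (A i ∩ W) = U i (A i ∩ Z) := fun i hi ↦ by
    refine hU i hi (hZ i hi) ?_
    rw [← inter_blockwiseFree hA hN hUA hi Z]
    calc (A i ∩ W) \ (A i ∩ blockwiseFree T A U N Z)
        = A i ∩ (W \ blockwiseFree T A U N Z) := (inf_sdiff_distrib_left _ _ _).symm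
      _ = A i ∩ (Z \ blockwiseFree T A U N Z) := by rw [hWZ]
      _ = (A i ∩ Z) \ (A i ∩ blockwiseFree T A U N Z) := inf_sdiff_distrib_left _ _ _
  refine ⟨fun i hi ↦ (hblock i hi).1, ?_⟩
  simp only [blockwiseFree]
  rw [Finset.biUnion_congr rfl fun i hi ↦ (hblock i hi).2]

lemma sum_card_add_card_le_card_union_blockwiseFree (hA : (T : Set ι).PairwiseDisjoint A)
    (hN : ∀ i ∈ T, Disjoint (A i) N) (hUA : ∀ i Z, U i Z ⊆ A i) (Z : Finset α) :
    ∑ i ∈ T, (A i ∩ Z ∪ U i (A i ∩ Z)).card + N.card ≤ (Z ∪ blockwiseFree T A U N Z).card := by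
  have hsub (i : ι) : A i ∩ Z ∪ U i (A i ∩ Z) ⊆ A i :=
    Finset.union_subset Finset.inter_subset_left (hUA i _)
  rw [← Finset.card_biUnion fun i hi j hj hij ↦ (hA hi hj hij).mono (hsub i) (hsub j),
    ← Finset.card_union_of_disjoint
      ((Finset.disjoint_biUnion_left _ _ _).2 fun i hi ↦ (hN i hi).mono_left (hsub i))]
  refine Finset.card_le_card fun a ha ↦ ?_
  simp only [blockwiseFree, Finset.mem_union, Finset.mem_biUnion, Finset.mem_inter] at ha ⊢
  grind

end Product

/-- The family of finite sets that meet each of the blocks `A i`, `i ∈ T`. -/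
def hittingSets (T : Finset ι) (A : ι → Finset α) : Set (Finset α) :=
  {Z | ∀ i ∈ T, (A i ∩ Z).Nonempty}

lemma hittingSets_mono {T : Finset ι} {A : ι → Finset α} {Z W : Finset α}
    (hZ : Z ∈ hittingSets T A) (hZW : Z ⊆ W) : W ∈ hittingSets T A :=
  fun i hi ↦ (hZ i hi).mono (Finset.inter_subset_inter_left hZW)

lemma insert_erase_mem_hittingSets {T : Finset ι} {A : ι → Finset α}
    (hA : (T : Set ι).PairwiseDisjoint A) {Z : Finset α} (hZ : Z ∈ hittingSets T A) {i : ι}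
    (hi : i ∈ T) {v y : α} (hv : v ∈ A i) (hy : y ∈ A i) :
    insert v (Z.erase y) ∈ hittingSets T A := fun k hk ↦ by
  obtain rfl | hki := eq_or_ne k i
  · exact ⟨v, by simp [hv]⟩
  · obtain ⟨w, hw⟩ := hZ k hk
    obtain ⟨hwk, hwZ⟩ := Finset.mem_inter.1 hw
    have hwy : w ≠ y := fun h ↦ hki (hA.elim_finset hk hi w hwk (h ▸ hy))
    exact ⟨w, by simp [hwk, hwZ, hwy]⟩

theorem exists_isIntervalPartition_hittingSets {T : Finset ι} {A : ι → Finset α}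
    (hA : (T : Set ι).PairwiseDisjoint A) {N : Finset α} (hN : ∀ i ∈ T, Disjoint (A i) N) :
    ∃ U, IsIntervalPartition (hittingSets T A) U ∧
      ∀ Z ∈ hittingSets T A, ∑ i ∈ T, ((A i).card + 1) / 2 + N.card ≤ (Z ∪ U Z).card := by
  choose U hU hUA hcard using fun i ↦ exists_isIntervalPartition_nonempty_subsets (A i)
  refine ⟨blockwiseFree T A U N, ?_, fun Z hZ ↦ ?_⟩
  · simpa [hittingSets] using isIntervalPartition_blockwiseFree hA hN hUA fun i _ ↦ hU i
  · calc ∑ i ∈ T, ((A i).card + 1) / 2 + N.card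
        ≤ ∑ i ∈ T, (A i ∩ Z ∪ U i (A i ∩ Z)).card + N.card :=
          Nat.add_le_add_right (Finset.sum_le_sum fun i hi ↦
            hcard i _ Finset.inter_subset_left (hZ i hi)) _
      _ ≤ (Z ∪ blockwiseFree T A U N Z).card :=
          sum_card_add_card_le_card_union_blockwiseFree hA hN hUA Z

end IntervalPartition

section Transversal

variable {α ι : Type*} [DecidableEq α] {T : Finset ι} {A : ι → Finset α}

/-- `C` consists of exactly one element from each of the blocks `A i`, `i ∈ T`. -/
def IsTransversal (T : Finset ι) (A : ι → Finset α) (C : Finset α) : Prop :=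
  C ⊆ T.biUnion A ∧ ∀ i ∈ T, ∃ y, A i ∩ C = {y}

lemma exists_isTransversal (hA : (T : Set ι).PairwiseDisjoint A) (hne : ∀ i ∈ T, (A i).Nonempty) :
    ∃ C, IsTransversal T A C ∧ C.card ≤ T.card := by
  choose y hy using hne
  refine ⟨T.attach.image fun i ↦ y i.1 i.2, ⟨fun v hv ↦ ?_, fun i hi ↦ ⟨y i hi, ?_⟩⟩,
    Finset.card_image_le.trans_eq T.card_attach⟩
  · obtain ⟨i, -, rfl⟩ := Finset.mem_image.1 hv
    exact Finset.mem_biUnion.2 ⟨i, i.2, hy i i.2⟩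
  · ext v
    simp only [Finset.mem_inter, Finset.mem_image, Finset.mem_attach, true_and,
      Finset.mem_singleton]
    constructor
    · rintro ⟨hvi, k, rfl⟩
      obtain rfl := hA.elim_finset hi k.2 _ hvi (hy k k.2)
      rfl
    · rintro rfl
      exact ⟨hy i hi, ⟨i, hi⟩, rfl⟩

namespace IsTransversal

variable {C : Finset α}

lemma mem_hittingSets (hC : IsTransversal T A C) : C ∈ hittingSets T A := fun i hi ↦ by
  obtain ⟨y, hy⟩ := hC.2 i hi
  exact hy ▸ Finset.singleton_nonempty y

lemma eq_of_mem (hC : IsTransversal T A C) {i : ι} (hi : i ∈ T) {v w : α} (hvi : v ∈ A i)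
    (hvC : v ∈ C) (hwi : w ∈ A i) (hwC : w ∈ C) : v = w := by
  obtain ⟨y, hy⟩ := hC.2 i hi
  have hmem {x : α} (hxi : x ∈ A i) (hxC : x ∈ C) : x = y :=
    Finset.mem_singleton.1 (hy ▸ Finset.mem_inter.2 ⟨hxi, hxC⟩)
  rw [hmem hvi hvC, hmem hwi hwC]

end IsTransversal

end Transversal

section StanleyDecomposition

variable {K : Type*} [Field K] {n : ℕ}

lemma iSup_restrictSupport {σ R : Type*} [CommSemiring R] {κ : Sort*} (B : κ → Set (σ →₀ ℕ)) :
    ⨆ k, restrictSupport R (B k) = restrictSupport R (⋃ k, B k) := by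
  simp only [restrictSupport_eq_span, Set.image_iUnion, Submodule.span_iUnion]

lemma disjoint_restrictSupport {σ R : Type*} [CommSemiring R] {B C : Set (σ →₀ ℕ)}
    (hBC : Disjoint B C) : Disjoint (restrictSupport R B) (restrictSupport R C) := by
  rw [restrictSupport_eq_span, restrictSupport_eq_span]
  exact (basisMonomials σ R).linearIndependent.disjoint_span_image hBC

lemma iSupIndep_restrictSupport {κ σ R : Type*} [CommSemiring R] {B : κ → Set (σ →₀ ℕ)}
    (hB : Pairwise (Function.onFun Disjoint B)) : iSupIndep fun k ↦ restrictSupport R (B k) := by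
  intro k
  simp only [iSup_restrictSupport]
  refine disjoint_restrictSupport ?_
  simp only [Set.disjoint_iUnion_right]
  exact fun l hl ↦ hB hl.symm

lemma le_sdepth_of_stanleyDecomp {I : Ideal (MvPolynomial (Fin n) K)} (hI : I ≠ ⊥) {k : ℕ}
    (D : StanleyDecomp K I) (hD : ∀ i, k ≤ (D.Z i).card) : k ≤ sdepth I := by
  refine le_csSup ⟨n, ?_⟩ ⟨D, hD⟩
  rintro l ⟨D', hD'⟩
  obtain ⟨i⟩ : Nonempty (Fin D'.m) := by
    by_contra hempty
    rw [not_nonempty_iff] at hempty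
    refine hI ((Submodule.restrictScalars_eq_bot_iff K _ _).1 ?_)
    rw [← D'.total, iSup_of_empty]
  exact (hD' i).trans ((D'.Z i).card_le_univ.trans_eq (Fintype.card_fin n))

lemma exists_stanleyDecomp {κ : Type*} [Finite κ] {I : Ideal (MvPolynomial (Fin n) K)}
    {u : κ → Fin n →₀ ℕ} {Z : κ → Finset (Fin n)} {B : κ → Set (Fin n →₀ ℕ)}
    (hspace : ∀ k, stanleySpace K (u k) (Z k) = restrictSupport K (B k))
    (hB : Pairwise (Function.onFun Disjoint B))
    (hI : I.restrictScalars K = restrictSupport K (⋃ k, B k)) :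
    ∃ D : StanleyDecomp K I, ∀ i, ∃ k, D.Z i = Z k := by
  let e := (Finite.equivFin κ).symm
  have hmem (k : κ) : monomial (u k) (1 : K) ∈ stanleySpace K (u k) (Z k) :=
    Submodule.subset_span ⟨0, by simp, by simp⟩
  have htotal : ⨆ k, stanleySpace K (u k) (Z k) = I.restrictScalars K := by
    simp only [hspace, iSup_restrictSupport, hI]
  refine ⟨⟨Nat.card κ, u ∘ e, Z ∘ e, fun i ↦ ?_, ?_, ?_⟩, fun i ↦ ⟨e i, rfl⟩⟩
  · rw [← Submodule.restrictScalars_mem K, ← htotal]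
    exact Submodule.mem_iSup_of_mem (e i) (hmem (e i))
  · simp only [Function.comp_apply, hspace]
    exact iSupIndep_restrictSupport (hB.comp_of_injective e.injective)
  · exact (e.iSup_comp (g := fun k ↦ stanleySpace K (u k) (Z k))).trans htotal

/-- The exponent vector of the squarefree monomial `∏ v ∈ X, x_v`. -/
noncomputable def sqfreeExponent {σ : Type*} (X : Finset σ) : σ →₀ ℕ :=
  Finsupp.indicator X fun _ _ ↦ 1

lemma sqfreeExponent_apply {σ : Type*} [DecidableEq σ] (X : Finset σ) (v : σ) :
    sqfreeExponent X v = if v ∈ X then 1 else 0 := by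
  simp [sqfreeExponent, Finsupp.indicator_apply]

lemma support_sqfreeExponent {σ : Type*} (X : Finset σ) : (sqfreeExponent X).support = X := by
  classical
  ext v
  simp [sqfreeExponent_apply]

lemma sqfreeExponent_insert {σ : Type*} [DecidableEq σ] {X : Finset σ} {v : σ} (hv : v ∉ X) :
    sqfreeExponent (insert v X) = Finsupp.single v 1 + sqfreeExponent X := by
  ext w
  simp only [sqfreeExponent_apply, Finsupp.add_apply, Finsupp.single_apply]
  grind

lemma sqfreeExponent_le_iff {σ : Type*} {X : Finset σ} {d : σ →₀ ℕ} :
    sqfreeExponent X ≤ d ↔ X ⊆ d.support := by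
  classical
  refine ⟨fun h ↦ (support_sqfreeExponent X).ge.trans (Finsupp.support_mono h), fun h v ↦ ?_⟩
  rw [sqfreeExponent_apply]
  split_ifs with hv
  · exact Nat.one_le_iff_ne_zero.2 (Finsupp.mem_support_iff.1 (h hv))
  · exact Nat.zero_le _

lemma stanleySpace_sqfreeExponent {X V : Finset (Fin n)} (hXV : Disjoint X V) :
    stanleySpace K (sqfreeExponent X) (X ∪ V) = restrictSupport K {d | d.support \ V = X} := by
  rw [restrictSupport_eq_span, stanleySpace]
  congr 1
  ext f
  constructor
  · rintro ⟨e, he, rfl⟩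
    refine ⟨_, ?_, rfl⟩
    have hsupport : (sqfreeExponent X + e).support = X ∪ e.support := by
      ext v
      simp [sqfreeExponent_apply, imp_iff_not_or]
    have heXV : e.support ⊆ X ∪ V := fun v hv ↦ he v (Finsupp.mem_support_iff.1 hv)
    rw [Set.mem_ofPred_eq, hsupport, Finset.union_sdiff_distrib,
      Finset.sdiff_eq_self_of_disjoint hXV, Finset.union_eq_left]
    exact sdiff_le_iff.2 (heXV.trans (Finset.union_comm X V).le)
  · rintro ⟨d, rfl, rfl⟩
    have hle : sqfreeExponent (d.support \ V) ≤ d :=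
      sqfreeExponent_le_iff.2 Finset.sdiff_subset
    refine ⟨d - sqfreeExponent (d.support \ V), fun v hv ↦ ?_, ?_⟩
    · rw [Finset.sdiff_union_self_eq_union]
      refine Finset.mem_union_left _ (Finsupp.mem_support_iff.2 fun h0 ↦ hv ?_)
      rw [Finsupp.tsub_apply, h0, Nat.zero_sub]
    · rw [add_tsub_cancel_of_le hle]

variable {F : Set (Finset (Fin n))} {U : Finset (Fin n) → Finset (Fin n)}

-- The decomposition has one Stanley space for each bottom element `Z \ U Z` of an interval.
theorem IsIntervalPartition.le_sdepth (hU : IsIntervalPartition F U) (hF : F.Nonempty)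
    {I : Ideal (MvPolynomial (Fin n) K)}
    (hI : I.restrictScalars K = restrictSupport K {d | d.support ∈ F}) {k : ℕ}
    (hk : ∀ Z ∈ F, k ≤ (Z ∪ U Z).card) : k ≤ sdepth I := by
  let κ := {Z // Z ∈ F ∧ Disjoint Z (U Z)}
  let B : κ → Set (Fin n →₀ ℕ) := fun Z ↦ {d | d.support \ U Z = Z}
  have hB : Pairwise (Function.onFun Disjoint B) := fun Z W hZW ↦ by
    refine Set.disjoint_left.2 fun d hdZ hdW ↦ hZW (Subtype.ext ?_)
    exact (hU.mem_of_sdiff_eq Z.2.1 Z.2.2 hdZ).2.symm.trans (hU.mem_of_sdiff_eq W.2.1 W.2.2 hdW).2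
  have hcover : {d : Fin n →₀ ℕ | d.support ∈ F} = ⋃ Z, B Z := by
    ext d
    refine ⟨fun hd ↦ ?_, fun hd ↦ ?_⟩
    · obtain ⟨Z, hZ, hZU, hdZ⟩ := hU.exists_sdiff_eq hd
      exact Set.mem_iUnion.2 ⟨⟨Z, hZ, hZU⟩, hdZ⟩
    · obtain ⟨Z, hdZ⟩ := Set.mem_iUnion.1 hd
      exact (hU.mem_of_sdiff_eq Z.2.1 Z.2.2 hdZ).1
  obtain ⟨D, hD⟩ := exists_stanleyDecomp (fun Z : κ ↦ stanleySpace_sqfreeExponent Z.2.2) hB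
    (hI.trans (congrArg _ hcover))
  refine le_sdepth_of_stanleyDecomp ?_ D fun i ↦ ?_
  · rintro rfl
    obtain ⟨Z, hZ⟩ := hF
    have hmem : monomial (sqfreeExponent Z) (1 : K) ∈ restrictSupport K {d | d.support ∈ F} := by
      rw [monomial_mem_restrictSupport]
      exact Or.inl (by simpa [support_sqfreeExponent] using hZ)
    simp [← hI] at hmem
  · obtain ⟨Z, hZ⟩ := hD i
    exact hZ ▸ hk Z Z.2.1

end StanleyDecomposition

section ModuleDepth

universe u

open CategoryTheory Abelian RingTheory.Sequence

variable {R : Type u} [CommRing R]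

lemma subsingleton_ext_quotSMulTop {N M : ModuleCat.{u} R} {a : R} (ha : IsSMulRegular M a) {i : ℕ}
    (hi : Subsingleton (Ext N M i)) (hi' : Subsingleton (Ext N M (i + 1))) :
    Subsingleton (Ext N (ModuleCat.of R (QuotSMulTop a M)) i) :=
  AddCommGrpCat.subsingleton_of_isZero <| ShortComplex.Exact.isZero_of_both_zeros
    (Ext.covariant_sequence_exact₃' N ha.smulShortComplex_shortExact i (i + 1) rfl)
    ((AddCommGrpCat.isZero_of_iff_subsingleton.2 hi).eq_zero_of_src _)
    ((AddCommGrpCat.isZero_of_iff_subsingleton.2 hi').eq_zero_of_tgt _)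

lemma subsingleton_linearMap_of_isWeaklyRegular {N M : ModuleCat.{u} R} {ys : List R}
    (hys : IsWeaklyRegular M ys) (hext : ∀ i ≤ ys.length, Subsingleton (Ext N M i)) :
    Subsingleton (N →ₗ[R] M ⧸ (Ideal.ofList ys • ⊤ : Submodule R M)) := by
  induction ys generalizing M with
  | nil =>
    have hbot : (Ideal.ofList ([] : List R) • ⊤ : Submodule R M) = ⊥ := by simp
    have := hext 0 le_rfl
    have : Subsingleton (N →ₗ[R] M) := (Ext.addEquiv₀.trans ModuleCat.homAddEquiv).symm.subsingleton
    exact (Submodule.quotEquivOfEqBot _ hbot).congrRight.toEquiv.subsingleton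
  | cons a ys ih =>
    rw [isWeaklyRegular_cons_iff] at hys
    have := @ih (ModuleCat.of R (QuotSMulTop a M)) hys.2 fun i hi ↦
      subsingleton_ext_quotSMulTop hys.1 (hext i (by grind)) (hext (i + 1) (by grind))
    exact (Submodule.quotOfListConsSMulTopEquivQuotSMulTopInner M a
      ys).congrRight.toEquiv.subsingleton

variable {M : Type u} [AddCommGroup M] [Module R M] {I : Ideal R}

lemma not_subsingleton_linearMap_of_socle {M' : Submodule R M} {z : M} (hz : z ∉ M')
    (hIz : ∀ g ∈ I, g • z ∈ M') : ¬ Subsingleton (R ⧸ I →ₗ[R] M ⧸ M') := by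
  intro hsub
  let φ : R ⧸ I →ₗ[R] M ⧸ M' := Submodule.liftQ I
    (LinearMap.toSpanSingleton R _ (M'.mkQ z)) fun g hg ↦ by
      simpa [← Submodule.Quotient.mk_smul, Submodule.Quotient.mk_eq_zero] using hIz g hg
  have hφ : φ (I.mkQ 1) = M'.mkQ z := by
    simp only [φ, Submodule.mkQ_apply, Submodule.liftQ_apply, LinearMap.toSpanSingleton_apply_one]
  rw [hsub.elim φ 0, LinearMap.zero_apply, eq_comm, Submodule.mkQ_apply,
    Submodule.Quotient.mk_eq_zero] at hφ
  exact hz hφ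

lemma smul_top_lt_top_of_socle [Module.Finite R M] {M' : Submodule R M} {z : M} (hz : z ∉ M')
    (hIz : ∀ g ∈ I, g • z ∈ M') : I • (⊤ : Submodule R M) < ⊤ := by
  refine lt_top_iff_ne_top.2 fun htop ↦ hz ?_
  obtain ⟨a, ha, haz⟩ := Submodule.exists_sub_one_mem_and_smul_eq_zero_of_fg_of_le_smul I ⊤
    Module.Finite.fg_top htop.ge
  have hz_eq : -((a - 1) • z) = z := by simp [sub_smul, haz z trivial]
  exact hz_eq ▸ M'.neg_mem (hIz _ ha)

-- By the theorem of Rees, a longer regular sequence in `I` would make `Ext i (R ⧸ I) M` vanish for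
-- all `i ≤ ys.length`, hence also `Hom (R ⧸ I) (M ⧸ ys • M)`, but `z` spans a nonzero image of
-- `R ⧸ I`.
theorem moduleDepth_le_length_of_socle [IsNoetherianRing R] [Module.Finite R M] {ys : List R}
    (hys : IsWeaklyRegular M ys) {z : M} (hz : z ∉ (Ideal.ofList ys • ⊤ : Submodule R M))
    (hIz : ∀ g ∈ I, g • z ∈ (Ideal.ofList ys • ⊤ : Submodule R M)) :
    moduleDepth R I M ≤ ys.length := by
  refine csSup_le' ?_
  rintro k ⟨rs, rfl, hrs_mem, hrs⟩
  by_contra! hlt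
  have hsupport : Module.support R (R ⧸ I) ⊆ PrimeSpectrum.zeroLocus I := by
    rw [Module.support_eq_zeroLocus, Ideal.annihilator_quotient]
  have hext := ModuleCat.subsingleton_ext_of_exists_isRegular I (ModuleCat.of R (R ⧸ I)) hsupport
    (ModuleCat.of R M) (smul_top_lt_top_of_socle hz hIz) rs hrs_mem hrs
  exact not_subsingleton_linearMap_of_socle hz hIz
    (subsingleton_linearMap_of_isWeaklyRegular (N := ModuleCat.of R (R ⧸ I))
      (M := ModuleCat.of R M) hys fun i hi ↦ hext i (hi.trans_lt hlt))

end ModuleDepth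

section IntersectionIdeal

variable {K : Type*} [Field K] {n : ℕ} {ι : Type*}

open Pointwise in
lemma mem_span_X_mul_span_monomial_iff {σ R : Type*} [CommSemiring R] {V : Set σ}
    {E : Set (σ →₀ ℕ)} {f : MvPolynomial σ R} :
    f ∈ Ideal.span (X '' V) * Ideal.span ((fun d ↦ monomial d (1 : R)) '' E) ↔
      ∀ d ∈ f.support, ∃ j ∈ V, ∃ m ∈ E, Finsupp.single j 1 + m ≤ d := by
  have hgen : (X '' V : Set (MvPolynomial σ R)) * (fun d ↦ monomial d (1 : R)) '' E =
      (fun d ↦ monomial d (1 : R)) '' Set.image2 (fun j m ↦ Finsupp.single j 1 + m) V E := by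
    simp only [← Set.image2_mul, Set.image_image2, Set.image2_image_left, Set.image2_image_right]
    exact Set.image2_congr fun j _ m _ ↦ by simp [X, monomial_mul]
  rw [Ideal.span_mul_span', hgen, mem_ideal_span_monomial_image]
  simp only [Set.exists_mem_image2]

/-- The intersection of the monomial primes generated by the blocks of variables `A i`, `i ∈ T`. -/
noncomputable def interVarIdeal (K : Type*) [Field K] (T : Finset ι) (A : ι → Finset (Fin n)) :
    Ideal (MvPolynomial (Fin n) K) :=
  ⨅ i ∈ T, varIdeal K (A i)

variable {T : Finset ι} {A : ι → Finset (Fin n)}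

lemma mem_interVarIdeal_iff {f : MvPolynomial (Fin n) K} :
    f ∈ interVarIdeal K T A ↔ ∀ d ∈ f.support, d.support ∈ hittingSets T A := by
  have hvar (B : Finset (Fin n)) :
      f ∈ varIdeal K B ↔ ∀ d ∈ f.support, (B ∩ d.support).Nonempty := by
    simp [varIdeal, mem_ideal_span_X_image, Finset.Nonempty]
  simp only [interVarIdeal, Ideal.mem_iInf, hvar, hittingSets, Set.mem_ofPred_eq]
  grind

lemma restrictScalars_interVarIdeal : (interVarIdeal K T A).restrictScalars K =
    restrictSupport K {d | d.support ∈ hittingSets T A} := by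
  ext f
  rw [Submodule.restrictScalars_mem, mem_interVarIdeal_iff, mem_restrictSupport_iff]
  rfl

lemma monomial_sqfreeExponent_mem_interVarIdeal {Z : Finset (Fin n)} (hZ : Z ∈ hittingSets T A) :
    monomial (sqfreeExponent Z) (1 : K) ∈ interVarIdeal K T A := by
  simpa [mem_interVarIdeal_iff, support_monomial, support_sqfreeExponent] using hZ

lemma interVarIdeal_eq_span : interVarIdeal K T A =
    Ideal.span ((fun d ↦ monomial d (1 : K)) '' {d | d.support ∈ hittingSets T A}) := by
  ext f
  rw [mem_interVarIdeal_iff, mem_ideal_span_monomial_image]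
  exact forall₂_congr fun d _ ↦ ⟨fun hd ↦ ⟨d, hd, le_rfl⟩,
    fun ⟨_, he, hed⟩ ↦ hittingSets_mono he (Finsupp.support_mono hed)⟩

lemma mem_span_X_mul_interVarIdeal_iff {V : Set (Fin n)} {f : MvPolynomial (Fin n) K} :
    f ∈ Ideal.span (X '' V) * interVarIdeal K T A ↔ ∀ d ∈ f.support, ∃ j ∈ V,
      ∃ m : Fin n →₀ ℕ, m.support ∈ hittingSets T A ∧ Finsupp.single j 1 + m ≤ d := by
  rw [interVarIdeal_eq_span, mem_span_X_mul_span_monomial_iff]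
  rfl

theorem sum_half_card_add_card_le_sdepth_interVarIdeal (hA : (T : Set ι).PairwiseDisjoint A)
    (hne : ∀ i ∈ T, (A i).Nonempty) :
    ∑ i ∈ T, ((A i).card + 1) / 2 + (T.biUnion A)ᶜ.card ≤ sdepth (interVarIdeal K T A) := by
  obtain ⟨U, hU, hcard⟩ := exists_isIntervalPartition_hittingSets hA fun i hi ↦
    disjoint_compl_right.mono_left (Finset.subset_biUnion_of_mem A hi)
  have huniv : Finset.univ ∈ hittingSets T A := by simpa [hittingSets] using hne
  exact hU.le_sdepth ⟨_, huniv⟩ restrictScalars_interVarIdeal hcard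

lemma mem_span_X_mul_interVarIdeal_of_X_mul_mem {V : Set (Fin n)} {y : Fin n} (hyV : y ∉ V)
    (hV : ∀ i ∈ T, y ∈ A i → Disjoint V (A i)) {f : MvPolynomial (Fin n) K}
    (hf : f ∈ interVarIdeal K T A) (hyf : X y * f ∈ Ideal.span (X '' V) * interVarIdeal K T A) :
    f ∈ Ideal.span (X '' V) * interVarIdeal K T A := by
  rw [mem_span_X_mul_interVarIdeal_iff] at hyf ⊢
  intro d hd
  obtain ⟨j, hj, m, hm, hle⟩ := hyf (Finsupp.single y 1 + d) (by
    rwa [mem_support_iff, coeff_X_mul, ← mem_support_iff])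
  have hjy : y ≠ j := fun h ↦ hyV (h ▸ hj)
  have hjd : Finsupp.single j 1 ≤ d := by
    have hle_j : 1 + m j ≤ d j := by simpa [Finsupp.single_apply, hjy] using hle j
    exact Finsupp.single_le_iff.2 (le_of_add_le_left hle_j)
  refine ⟨j, hj, d - Finsupp.single j 1, fun i hi ↦ ?_, (add_tsub_cancel_of_le hjd).le⟩
  by_cases hji : j ∈ A i
  · have hyi : y ∉ A i := fun hyi ↦ Set.disjoint_left.1 (hV i hi hyi) hj hji
    obtain ⟨v, hv⟩ := hm i hi
    obtain ⟨hvi, hvm⟩ := Finset.mem_inter.1 hv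
    have hyv : y ≠ v := fun h ↦ hyi (h ▸ hvi)
    have hle_v : Finsupp.single j 1 v + m v ≤ d v := by
      simpa [Finsupp.single_apply, hyv] using hle v
    refine ⟨v, Finset.mem_inter.2 ⟨hvi, ?_⟩⟩
    rw [Finsupp.mem_support_iff] at hvm ⊢
    rw [Finsupp.tsub_apply]
    lia
  · obtain ⟨v, hv⟩ := mem_interVarIdeal_iff.1 hf d hd i hi
    obtain ⟨hvi, hvd⟩ := Finset.mem_inter.1 hv
    have hvj : v ≠ j := fun h ↦ hji (h ▸ hvi)
    refine ⟨v, Finset.mem_inter.2 ⟨hvi, ?_⟩⟩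
    rw [Finsupp.mem_support_iff] at hvd ⊢
    rwa [Finsupp.tsub_apply, Finsupp.single_eq_of_ne hvj, Nat.sub_zero]

lemma ofList_map_X {σ R : Type*} [CommSemiring R] (L : List σ) :
    Ideal.ofList (L.map (X : σ → MvPolynomial σ R)) = Ideal.span (X '' {j | j ∈ L}) := by
  simp [Ideal.ofList, Set.image]

lemma mem_ofList_map_X_smul_top_iff {σ R : Type*} [CommSemiring R] {I : Ideal (MvPolynomial σ R)}
    {L : List σ} {f : I} :
    f ∈ (Ideal.ofList (L.map (X (R := R))) • ⊤ : Submodule (MvPolynomial σ R) I) ↔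
      (f : MvPolynomial σ R) ∈ Ideal.span (X '' {j | j ∈ L}) * I := by
  rw [Submodule.mem_smul_top_iff, ofList_map_X, smul_eq_mul]

lemma isWeaklyRegular_map_X_interVarIdeal {L : List (Fin n)} (hL : L.Nodup)
    (hLA : ∀ i ∈ T, {j | j ∈ L ∧ j ∈ A i}.Subsingleton) :
    RingTheory.Sequence.IsWeaklyRegular (interVarIdeal K T A)
      (L.map (X : Fin n → MvPolynomial (Fin n) K)) := by
  refine ⟨fun k hk ↦ ?_⟩
  rw [List.length_map] at hk
  have hnotMem : L[k] ∉ L.take k := by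
    intro hmem
    obtain ⟨l, hl, hlk⟩ := List.mem_take_iff_getElem.1 hmem
    exact (hl.trans_le (min_le_left _ _)).ne ((hL.getElem_inj_iff).1 hlk)
  rw [List.getElem_map, ← List.map_take, isSMulRegular_iff_right_eq_zero_of_smul]
  intro q hq
  obtain ⟨f, rfl⟩ := Submodule.mkQ_surjective _ q
  rw [← map_smul, Submodule.mkQ_apply, Submodule.Quotient.mk_eq_zero,
    mem_ofList_map_X_smul_top_iff] at hq
  rw [Submodule.mkQ_apply, Submodule.Quotient.mk_eq_zero, mem_ofList_map_X_smul_top_iff]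
  refine mem_span_X_mul_interVarIdeal_of_X_mul_mem hnotMem
    (fun i hi hki ↦ Set.disjoint_left.2 fun j hj hji ↦ ?_) f.2 hq
  exact hnotMem (hLA i hi ⟨List.mem_of_mem_take hj, hji⟩ ⟨List.getElem_mem hk, hki⟩ ▸ hj)

namespace IsTransversal

variable {C : Finset (Fin n)}

lemma monomial_notMem (hC : IsTransversal T A C) (V : Set (Fin n)) :
    monomial (sqfreeExponent C) (1 : K) ∉ Ideal.span (X '' V) * interVarIdeal K T A := by
  rw [mem_span_X_mul_interVarIdeal_iff]
  intro h
  obtain ⟨j, -, m, hm, hle⟩ := h (sqfreeExponent C) (by simp)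
  have hsupport {v : Fin n} (hv : (Finsupp.single j 1 + m : Fin n →₀ ℕ) v ≠ 0) : v ∈ C := by
    rw [← support_sqfreeExponent C]
    exact Finsupp.support_mono hle (Finsupp.mem_support_iff.2 hv)
  have hjC : j ∈ C := hsupport (by simp)
  obtain ⟨i, hi, hji⟩ := Finset.mem_biUnion.1 (hC.1 hjC)
  obtain ⟨v, hv⟩ := hm i hi
  obtain ⟨hvi, hvm⟩ := Finset.mem_inter.1 hv
  rw [Finsupp.mem_support_iff] at hvm
  obtain rfl : v = j := hC.eq_of_mem hi hvi (hsupport (by simp [hvm])) hji hjC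
  have hexp := hle v
  rw [sqfreeExponent_apply, if_pos hjC, Finsupp.add_apply, Finsupp.single_eq_same] at hexp
  lia

-- Within a block, the variable `v` can be exchanged for the variable chosen by `C`.
lemma X_mul_monomial_mem (hC : IsTransversal T A C) (hA : (T : Set ι).PairwiseDisjoint A)
    (v : Fin n) : X v * monomial (sqfreeExponent C) (1 : K) ∈
      Ideal.span (X '' ↑(C ∪ (T.biUnion A)ᶜ)) * interVarIdeal K T A := by
  by_cases hv : v ∈ C ∪ (T.biUnion A)ᶜ
  · exact Ideal.mul_mem_mul (Ideal.subset_span ⟨v, hv, rfl⟩)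
      (monomial_sqfreeExponent_mem_interVarIdeal hC.mem_hittingSets)
  obtain ⟨hvC, i, hi, hvi⟩ : v ∉ C ∧ ∃ i ∈ T, v ∈ A i := by simpa using hv
  obtain ⟨y, hy⟩ := hC.mem_hittingSets i hi
  obtain ⟨hyi, hyC⟩ := Finset.mem_inter.1 hy
  have hX_mul {w : Fin n} {D : Finset (Fin n)} (hw : w ∉ D) :
      X w * monomial (sqfreeExponent D) (1 : K) = monomial (sqfreeExponent (insert w D)) 1 := by
    rw [sqfreeExponent_insert hw, X, monomial_mul, one_mul]
  have hexchange : X v * monomial (sqfreeExponent C) (1 : K) =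
      X y * monomial (sqfreeExponent (insert v (C.erase y))) 1 := by
    rw [hX_mul hvC, hX_mul (by grind), Finset.insert_comm, Finset.insert_erase hyC]
  rw [hexchange]
  exact Ideal.mul_mem_mul (Ideal.subset_span ⟨y, by simp [hyC], rfl⟩)
    (monomial_sqfreeExponent_mem_interVarIdeal
      (insert_erase_mem_hittingSets hA hC.mem_hittingSets hi hvi hyi))

lemma mul_monomial_mem (hC : IsTransversal T A C) (hA : (T : Set ι).PairwiseDisjoint A)
    {g : MvPolynomial (Fin n) K} (hg : g ∈ maxIdeal n K) : g * monomial (sqfreeExponent C) (1 : K) ∈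
      Ideal.span (X '' ↑(C ∪ (T.biUnion A)ᶜ)) * interVarIdeal K T A := by
  suffices hle : maxIdeal n K ≤ Submodule.colon
      (Ideal.span (X '' ↑(C ∪ (T.biUnion A)ᶜ)) * interVarIdeal K T A)
      {monomial (sqfreeExponent C) (1 : K)} from Submodule.mem_colon_singleton.1 (hle hg)
  refine Ideal.span_le.2 ?_
  rintro _ ⟨v, -, rfl⟩
  exact Submodule.mem_colon_singleton.2 (hC.X_mul_monomial_mem hA v)

theorem moduleDepth_interVarIdeal_le (hC : IsTransversal T A C)
    (hA : (T : Set ι).PairwiseDisjoint A) :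
    moduleDepth (MvPolynomial (Fin n) K) (maxIdeal n K) (interVarIdeal K T A) ≤
      (C ∪ (T.biUnion A)ᶜ).card := by
  let L := (C ∪ (T.biUnion A)ᶜ).toList
  have hL : {j | j ∈ L} = ↑(C ∪ (T.biUnion A)ᶜ) := by ext; simp [L]
  have hLA : ∀ i ∈ T, {j | j ∈ L ∧ j ∈ A i}.Subsingleton := by
    have hLC {i : ι} (hi : i ∈ T) {j : Fin n} (hj : j ∈ L) (hji : j ∈ A i) : j ∈ C := by
      have hj' : j ∈ C ∨ j ∉ T.biUnion A := by simpa [L] using hj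
      exact hj'.resolve_right fun hj ↦ hj (Finset.mem_biUnion.2 ⟨i, hi, hji⟩)
    exact fun i hi j hj k hk ↦ hC.eq_of_mem hi hj.2 (hLC hi hj.1 hj.2) hk.2 (hLC hi hk.1 hk.2)
  have hdepth := moduleDepth_le_length_of_socle (I := maxIdeal n K)
    (isWeaklyRegular_map_X_interVarIdeal (K := K) (Finset.nodup_toList _) hLA)
    (z := ⟨_, monomial_sqfreeExponent_mem_interVarIdeal hC.mem_hittingSets⟩)
    (mem_ofList_map_X_smul_top_iff.not.2 (hC.monomial_notMem _))
    fun g hg ↦ mem_ofList_map_X_smul_top_iff.2 (hL ▸ hC.mul_monomial_mem hA hg)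
  rwa [List.length_map, Finset.length_toList] at hdepth

end IsTransversal

theorem moduleDepth_interVarIdeal_le (hA : (T : Set ι).PairwiseDisjoint A)
    (hne : ∀ i ∈ T, (A i).Nonempty) :
    moduleDepth (MvPolynomial (Fin n) K) (maxIdeal n K) (interVarIdeal K T A) ≤
      T.card + (T.biUnion A)ᶜ.card := by
  obtain ⟨C, hC, hcard⟩ := exists_isTransversal hA hne
  exact (hC.moduleDepth_interVarIdeal_le hA).trans
    ((Finset.card_union_le _ _).trans (Nat.add_le_add_right hcard _))

end IntersectionIdeal

lemma card_le_sum_half_card {α ι : Type*} {T : Finset ι} {A : ι → Finset α}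
    (hne : ∀ i ∈ T, (A i).Nonempty) :
    T.card ≤ ∑ i ∈ T, ((A i).card + 1) / 2 := by
  rw [Finset.card_eq_sum_ones]
  refine Finset.sum_le_sum fun i hi ↦ ?_
  have := (hne i hi).card_pos
  lia

theorem sdepth_inter_disjoint_primes_general {K : Type*} [Field K] {n : ℕ} {ι : Type*}
    (T : Finset ι) (A : ι → Finset (Fin n)) (hA : (T : Set ι).PairwiseDisjoint A)
    (hne : ∀ i ∈ T, (A i).Nonempty) :
    ∑ i ∈ T, ((A i).card + 1) / 2 + (T.biUnion A)ᶜ.card ≤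
        sdepth (⨅ i ∈ T, varIdeal K (A i)) ∧
      T.card ≤ ∑ i ∈ T, ((A i).card + 1) / 2 ∧
      moduleDepth (MvPolynomial (Fin n) K) (maxIdeal n K)
          (⨅ i ∈ T, varIdeal K (A i) : Ideal (MvPolynomial (Fin n) K)) ≤
        sdepth (⨅ i ∈ T, varIdeal K (A i)) := by
  have hsdepth := sum_half_card_add_card_le_sdepth_interVarIdeal (K := K) hA hne
  have hsum := card_le_sum_half_card hne
  have hdepth := moduleDepth_interVarIdeal_le (K := K) hA hne
  exact ⟨hsdepth, hsum, hdepth.trans ((Nat.add_le_add_right hsum _).trans hsdepth)⟩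

section ConsecutiveBlocks

/-- The variables with zero-based indices `r i, …, r (i + 1) - 1`. With the informal statement's
one-based indexing of variables and primes they are the generators of `P_{i+1}`. -/
def consecutiveBlock (n : ℕ) (r : ℕ → ℕ) (i : ℕ) : Finset (Fin n) :=
  Finset.univ.filter fun j : Fin n ↦ r i ≤ (j : ℕ) ∧ (j : ℕ) < r (i + 1)

variable {n s : ℕ} {r : ℕ → ℕ}

lemma card_consecutiveBlock (hr : MonotoneOn r (Set.Iic s)) (hn : r s ≤ n) {i : ℕ} (hi : i < s) :
    (consecutiveBlock n r i).card = r (i + 1) - r i := by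
  have hle : r (i + 1) ≤ n := (hr hi Set.self_mem_Iic hi).trans hn
  rw [← Nat.card_Ico, ← Finset.card_map Fin.valEmbedding]
  congr 1
  ext j
  simp only [consecutiveBlock, Finset.mem_map, Finset.mem_filter, Finset.mem_univ, true_and,
    Fin.valEmbedding_apply, Finset.mem_Ico]
  exact ⟨fun ⟨_, hk, hkj⟩ ↦ hkj ▸ hk, fun hj ↦ ⟨⟨j, hj.2.trans_le hle⟩, hj, rfl⟩⟩

lemma pairwiseDisjoint_consecutiveBlock (hr : MonotoneOn r (Set.Iic s)) :
    (Finset.range s : Set ℕ).PairwiseDisjoint (consecutiveBlock n r) := by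
  intro i hi k hk hik
  refine Finset.disjoint_filter.2 fun j _ hji hjk ↦ ?_
  rw [Finset.mem_coe, Finset.mem_range] at hi hk
  obtain hlt | hlt := hik.lt_or_gt
  · exact (hji.2.trans_le (hr hi hk.le hlt)).not_ge hjk.1
  · exact (hjk.2.trans_le (hr hk hi.le hlt)).not_ge hji.1

lemma consecutiveBlock_nonempty (hr : StrictMonoOn r (Set.Iic s)) (hn : r s ≤ n) {i : ℕ}
    (hi : i < s) : (consecutiveBlock n r i).Nonempty := by
  rw [← Finset.card_pos, card_consecutiveBlock hr.monotoneOn hn hi]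
  exact Nat.sub_pos_of_lt (hr hi.le hi i.lt_succ_self)

lemma sum_half_card_consecutiveBlock (hr : MonotoneOn r (Set.Iic s)) (hn : r s ≤ n) :
    ∑ i ∈ Finset.range s, ((consecutiveBlock n r i).card + 1) / 2 =
      ∑ i ∈ Finset.range s, (r (i + 1) - r i + 1) / 2 :=
  Finset.sum_congr rfl fun _ hi ↦ by rw [card_consecutiveBlock hr hn (Finset.mem_range.1 hi)]

end ConsecutiveBlocks

/-- for primes `P_i` generated by disjoint consecutive blocks of
variables partitioning all `n` variables,
`sdepth (P₁ ∩ ⋯ ∩ P_s) ≥ Σ ⌈(r_i − r_{i-1})/2⌉ ≥ s`, and in particular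
`sdepth ≥ depth`, i.e. Stanley's conjecture holds. -/
theorem sdepth_inter_disjoint_primes {K : Type*} [Field K] (n s : ℕ) (hs : 0 < s)
    (r : ℕ → ℕ) (h0 : r 0 = 0) (hn : r s = n) (hmono : ∀ i < s, r i < r (i + 1)) :
    letI I : Ideal (MvPolynomial (Fin n) K) :=
      ⨅ i ∈ Finset.range s, varIdeal K
        (Finset.univ.filter fun j : Fin n => r i ≤ (j : ℕ) ∧ (j : ℕ) < r (i + 1))
    sdepth I ≥ (∑ i ∈ Finset.range s, (r (i + 1) - r i + 1) / 2) ∧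
      (∑ i ∈ Finset.range s, (r (i + 1) - r i + 1) / 2) ≥ s ∧
      sdepth I ≥ moduleDepth (MvPolynomial (Fin n) K) (maxIdeal n K) ↥I := by
  have hr : StrictMonoOn r (Set.Iic s) := strictMonoOn_Iic_of_lt_succ hmono
  have hblocks := sdepth_inter_disjoint_primes_general (K := K) (Finset.range s)
    (consecutiveBlock n r) (pairwiseDisjoint_consecutiveBlock hr.monotoneOn)
    fun i hi ↦ consecutiveBlock_nonempty hr hn.le (Finset.mem_range.1 hi)
  rw [sum_half_card_consecutiveBlock hr.monotoneOn hn.le, Finset.card_range] at hblocks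
  exact ⟨le_of_add_le_left hblocks.1, hblocks.2⟩
end

section
/- Let P_1, P_2, P_3 be three non-zero monomial prime ideals of S = K[x_1,...,x_n], none contained in another, with P_1 + P_2 + P_3 = (x_1,...,x_n), and I = P_1 ∩ P_2 ∩ P_3. If P_i ⊄ P_j + P_k for any permutation {i,j,k} of {1,2,3}, then depth_S(I) = 3. -/
open MvPolynomial

/-!
By Rees' theorem the depth of a finite module `M` with `𝔪M ≠ M` is the least `i` such that
`Ext^i(S/𝔪, M) ≠ 0`. If each of the primes `P₁, …, P_r` has a variable lying in none of the
others, then the depth of `P₁ ∩ ⋯ ∩ P_r` is `r + dim S/(P₁ + ⋯ + P_r)`, by induction on `r`: writing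
`J = P₁ ∩ ⋯ ∩ P_{r-1}`, distributivity of monomial ideals gives
`J + P_r = (P₁ + P_r) ∩ ⋯ ∩ (P_{r-1} + P_r)`, which falls under the induction hypothesis, and in
`0 → J ∩ P_r → J ⊕ P_r → J + P_r → 0` the middle term has larger depth than the right one.
-/

open CategoryTheory Abelian
open scoped Finset

universe u v w

section ExtGrade

variable {C : Type u} [Category.{v} C] [Abelian C] [HasExt.{w} C] {X Y : C} {d : ℕ}

/-- `d` is the grade of `Y` with respect to `X`: the least degree in which `Ext X Y` does not
vanish. It is a relation, so that nothing has to be chosen when all the `Ext` groups are zero. -/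
def IsExtGrade (X Y : C) (d : ℕ) : Prop :=
  IsLeast {i | Nontrivial (Ext X Y i)} d

lemma IsExtGrade.subsingleton (h : IsExtGrade X Y d) {i : ℕ} (hi : i < d) :
    Subsingleton (Ext X Y i) :=
  not_nontrivial_iff_subsingleton.mp fun hn => (h.2 hn).not_gt hi

lemma isExtGrade_of_forall_lt (h : ∀ i < d, Subsingleton (Ext X Y i))
    (hd : Nontrivial (Ext X Y d)) : IsExtGrade X Y d :=
  ⟨hd, fun i hi => le_of_not_gt fun hlt =>
    not_nontrivial_iff_subsingleton.mpr (h i hlt) hi⟩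

lemma IsExtGrade.of_iso {Y' : C} (h : IsExtGrade X Y d) (e : Y ≅ Y') : IsExtGrade X Y' d := by
  have hiff (i : ℕ) : Nontrivial (Ext X Y i) ↔ Nontrivial (Ext X Y' i) :=
    ((extFunctorObj X i).mapIso e).addCommGroupIsoToAddEquiv.toEquiv.nontrivial_congr
  simpa only [IsExtGrade, hiff] using h

lemma isExtGrade_self_zero (hX : ¬Limits.IsZero X) : IsExtGrade X X 0 := by
  refine isExtGrade_of_forall_lt (by simp) ?_
  have : Nontrivial (X ⟶ X) := ⟨𝟙 X, 0, fun h => hX ((Limits.IsZero.iff_id_eq_zero X).mpr h)⟩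
  exact (Ext.addEquiv₀ (X := X) (Y := X)).toEquiv.nontrivial

variable {S : ShortComplex C}

lemma subsingleton_ext_X₁_of_shortExact (hS : S.ShortExact)
    (hf : ∀ i ≤ d, ∀ x : Ext X S.X₁ i, x.comp (Ext.mk₀ S.f) (add_zero i) = 0)
    (h₃ : ∀ i < d, Subsingleton (Ext X S.X₃ i)) :
    ∀ i ≤ d, Subsingleton (Ext X S.X₁ i) := by
  intro i hi
  refine subsingleton_of_forall_eq 0 fun x => ?_
  cases i with
  | zero =>
    have := hS.mono_f
    refine Ext.postcomp_mk₀_injective_of_mono X S.f ?_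
    simpa using hf 0 hi x
  | succ i =>
    have := h₃ i hi
    obtain ⟨y, rfl⟩ := Ext.covariant_sequence_exact₁ X hS x (hf _ hi x) rfl
    rw [Subsingleton.elim y 0, Ext.zero_comp]

lemma subsingleton_ext_X₂_of_shortExact (hS : S.ShortExact) {i : ℕ}
    [Subsingleton (Ext X S.X₁ i)] [Subsingleton (Ext X S.X₃ i)] :
    Subsingleton (Ext X S.X₂ i) := by
  refine subsingleton_of_forall_eq 0 fun x => ?_
  obtain ⟨y, rfl⟩ := Ext.covariant_sequence_exact₂ X hS x (Subsingleton.elim _ _)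
  rw [Subsingleton.elim y 0, Ext.zero_comp]

lemma IsExtGrade.of_shortExact (hS : S.ShortExact)
    (h₂ : ∀ i ≤ d, Subsingleton (Ext X S.X₂ i)) (h₃ : IsExtGrade X S.X₃ d) :
    IsExtGrade X S.X₁ (d + 1) := by
  refine isExtGrade_of_forall_lt (fun i hi => ?_) ?_
  · exact subsingleton_ext_X₁_of_shortExact hS (fun i hi x => (h₂ i hi).elim _ _)
      (fun i hi => h₃.subsingleton hi) i (Nat.lt_succ_iff.mp hi)
  · have := h₂ d le_rfl
    by_contra hsub
    rw [not_nontrivial_iff_subsingleton] at hsub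
    refine not_nontrivial_iff_subsingleton.mpr (subsingleton_of_forall_eq 0 fun x => ?_) h₃.1
    obtain ⟨y, rfl⟩ := Ext.covariant_sequence_exact₃ X hS x rfl (Subsingleton.elim _ _)
    rw [Subsingleton.elim y 0, Ext.zero_comp]

end ExtGrade

section Modules

variable {R : Type u} [CommRing R] {N M M' M'' : Type u} [AddCommGroup N] [Module R N]
  [AddCommGroup M] [Module R M] [AddCommGroup M'] [Module R M'] [AddCommGroup M''] [Module R M'']
  {d : ℕ}

lemma IsExtGrade.of_exact {f : M →ₗ[R] M'} {g : M' →ₗ[R] M''} (hf : Function.Injective f)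
    (hfg : Function.Exact f g) (hg : Function.Surjective g)
    (h₂ : ∀ i ≤ d, Subsingleton (Ext (ModuleCat.of R N) (ModuleCat.of R M') i))
    (h₃ : IsExtGrade (ModuleCat.of R N) (ModuleCat.of R M'') d) :
    IsExtGrade (ModuleCat.of R N) (ModuleCat.of R M) (d + 1) :=
  .of_shortExact (ModuleCat.shortComplex_shortExact
    (ModuleCat.shortComplexOfCompEqZero f g hfg.linearMap_comp_eq_zero) hfg hf hg) h₂ h₃

lemma IsExtGrade.of_exact_lsmul {r : R} (hr : IsSMulRegular M r)
    (hrN : r ∈ Module.annihilator R N) {g : M →ₗ[R] M''}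
    (hrg : Function.Exact (LinearMap.lsmul R M r) g) (hg : Function.Surjective g)
    (h : IsExtGrade (ModuleCat.of R N) (ModuleCat.of R M'') d) :
    IsExtGrade (ModuleCat.of R N) (ModuleCat.of R M) (d + 1) := by
  refine .of_exact (f := LinearMap.lsmul R M r) hr hrg hg ?_ h
  exact subsingleton_ext_X₁_of_shortExact (ModuleCat.shortComplex_shortExact
      (ModuleCat.shortComplexOfCompEqZero _ g hrg.linearMap_comp_eq_zero) hrg hr hg)
    (fun i _ x => congrArg (fun φ => φ.hom x) (Ext.postcomp_smul_id_eq_zero_of_mem_annihilator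
      (M := ModuleCat.of R M) (N := ModuleCat.of R N) hrN i))
    (fun i hi => h.subsingleton hi)

lemma subsingleton_ext_prod {X : ModuleCat.{u} R} {i : ℕ}
    [Subsingleton (Ext X (ModuleCat.of R M) i)] [Subsingleton (Ext X (ModuleCat.of R M') i)] :
    Subsingleton (Ext X (ModuleCat.of R (M × M')) i) :=
  subsingleton_ext_X₂_of_shortExact (ModuleCat.shortComplex_shortExact
    (ModuleCat.shortComplexOfCompEqZero (LinearMap.inl R M M') (LinearMap.snd R M M')
      Function.Exact.inl_snd.linearMap_comp_eq_zero)
    Function.Exact.inl_snd LinearMap.inl_injective LinearMap.snd_surjective)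

lemma exact_prod_inclusion_coprod_inclusion (J L : Submodule R M) :
    Function.Exact
      ((Submodule.inclusion (inf_le_left : J ⊓ L ≤ J)).prod (Submodule.inclusion inf_le_right))
      ((Submodule.inclusion (le_sup_left : J ≤ J ⊔ L)).coprod
        (-Submodule.inclusion le_sup_right)) := by
  rintro ⟨⟨a, ha⟩, ⟨b, hb⟩⟩
  simp only [LinearMap.coprod_apply, LinearMap.neg_apply, ← sub_eq_add_neg, sub_eq_zero,
    Subtype.ext_iff, Submodule.coe_inclusion, Set.mem_range, LinearMap.prod_apply,
    Prod.ext_iff, Subtype.exists]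
  constructor
  · rintro rfl
    exact ⟨a, ⟨ha, hb⟩, rfl, rfl⟩
  · rintro ⟨c, -, rfl, rfl⟩
    rfl

lemma coprod_inclusion_surjective (J L : Submodule R M) :
    Function.Surjective ((Submodule.inclusion (le_sup_left : J ≤ J ⊔ L)).coprod
      (-Submodule.inclusion le_sup_right)) := by
  rintro ⟨x, hx⟩
  obtain ⟨a, ha, b, hb, rfl⟩ := Submodule.mem_sup.mp hx
  exact ⟨(⟨a, ha⟩, ⟨-b, neg_mem hb⟩), by simp [Subtype.ext_iff]⟩

lemma IsExtGrade.inf {J L : Submodule R M} {dJ dL : ℕ}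
    (hJ : IsExtGrade (ModuleCat.of R N) (ModuleCat.of R J) dJ)
    (hL : IsExtGrade (ModuleCat.of R N) (ModuleCat.of R L) dL)
    (hJL : IsExtGrade (ModuleCat.of R N) (ModuleCat.of R ↥(J ⊔ L)) d)
    (hdJ : d < dJ) (hdL : d < dL) :
    IsExtGrade (ModuleCat.of R N) (ModuleCat.of R ↥(J ⊓ L)) (d + 1) := by
  refine .of_exact ?_ (exact_prod_inclusion_coprod_inclusion J L)
    (coprod_inclusion_surjective J L) (fun i hi => ?_) hJL
  · intro a b hab
    exact Submodule.inclusion_injective inf_le_left (congrArg Prod.fst hab)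
  · have := hJ.subsingleton (hi.trans_lt hdJ)
    have := hL.subsingleton (hi.trans_lt hdL)
    exact subsingleton_ext_prod

lemma exact_lsmul_factor_sup_span_singleton (J : Ideal R) (r : R) :
    Function.Exact (LinearMap.lsmul R (R ⧸ J) r)
      (Submodule.factor (le_sup_left : J ≤ J ⊔ Ideal.span {r})) := by
  intro y
  obtain ⟨f, rfl⟩ := Submodule.mkQ_surjective J y
  rw [Submodule.factor_mk, Submodule.mkQ_apply, Submodule.Quotient.mk_eq_zero, sup_comm,
    Ideal.mem_span_singleton_sup, Set.mem_range, (Submodule.mkQ_surjective J).exists]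
  refine exists_congr fun g => ?_
  rw [LinearMap.lsmul_apply, ← map_smul, eq_comm, Submodule.mkQ_apply, Submodule.mkQ_apply,
    Submodule.Quotient.eq, smul_eq_mul]
  constructor
  · rintro ⟨b, hb, rfl⟩
    rwa [mul_comm g, add_sub_cancel_left]
  · exact fun h => ⟨_, h, by rw [mul_comm g, add_sub_cancel]⟩

lemma ideal_smul_top_lt_top [IsDomain R] [Module.IsTorsionFree R M] [Module.Finite R M]
    [Nontrivial M] {I : Ideal R} (hI : I ≠ ⊤) : I • (⊤ : Submodule R M) < ⊤ := by
  refine lt_top_iff_ne_top.mpr fun htop => hI ?_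
  obtain ⟨r, hrI, hr⟩ := Submodule.exists_sub_one_mem_and_smul_eq_zero_of_fg_of_le_smul
    I ⊤ Module.Finite.fg_top htop.ge
  obtain ⟨m, hm⟩ := exists_ne (0 : M)
  rw [(smul_eq_zero.mp (hr m trivial)).resolve_right hm, zero_sub, neg_mem_iff] at hrI
  exact (Ideal.eq_top_iff_one I).mpr hrI

lemma IsExtGrade.moduleDepth_eq [IsNoetherianRing R] [Module.Finite R M] {I : Ideal R}
    (hI : I • (⊤ : Submodule R M) < ⊤)
    (h : IsExtGrade (ModuleCat.of R (R ⧸ I)) (ModuleCat.of R M) d) :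
    moduleDepth R I M = d := by
  have hsupp : Module.support R (R ⧸ I) = PrimeSpectrum.zeroLocus I := by
    rw [Module.support_eq_zeroLocus, Ideal.annihilator_quotient]
  refine IsGreatest.csSup_eq ⟨?_, ?_⟩
  · exact ModuleCat.exists_isRegular_of_exists_subsingleton_ext I d (ModuleCat.of R M) hI
      (ModuleCat.of R (R ⧸ I)) hsupp fun i hi => h.subsingleton hi
  · rintro k ⟨rs, rfl, hrs, hreg⟩
    by_contra hlt
    exact not_nontrivial_iff_subsingleton.mpr
      (ModuleCat.subsingleton_ext_of_exists_isRegular I (ModuleCat.of R (R ⧸ I)) hsupp.subset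
        (ModuleCat.of R M) hI rs hrs hreg d (not_le.mp hlt)) h.1

end Modules

section VarIdeal

variable {K : Type u} [Field K] {n : ℕ} {A B : Finset (Fin n)} {f : MvPolynomial (Fin n) K}

lemma mem_varIdeal_iff : f ∈ varIdeal K A ↔ ∀ m ∈ f.support, ∃ i ∈ A, m i ≠ 0 :=
  mem_ideal_span_X_image

lemma X_mem_varIdeal_iff {a : Fin n} : (X a : MvPolynomial (Fin n) K) ∈ varIdeal K A ↔ a ∈ A := by
  simp [mem_varIdeal_iff, support_X, Finsupp.single_apply]

lemma varIdeal_le_iff {J : Ideal (MvPolynomial (Fin n) K)} :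
    varIdeal K A ≤ J ↔ ∀ a ∈ A, X a ∈ J := by
  simp [varIdeal, Ideal.span_le, Set.subset_def]

lemma varIdeal_le_varIdeal_iff : varIdeal K A ≤ varIdeal K B ↔ A ⊆ B := by
  simp only [varIdeal_le_iff, X_mem_varIdeal_iff, Finset.subset_iff]

lemma varIdeal_union (A B : Finset (Fin n)) :
    varIdeal K (A ∪ B) = varIdeal K A ⊔ varIdeal K B := by
  simp [varIdeal, Set.image_union]

lemma varIdeal_empty : varIdeal K (∅ : Finset (Fin n)) = ⊥ := by
  simp [varIdeal]

lemma varIdeal_insert (a : Fin n) (A : Finset (Fin n)) :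
    varIdeal K (insert a A) = varIdeal K A ⊔ Ideal.span {X a} := by
  simp [varIdeal, Set.image_insert_eq, Ideal.span_insert, sup_comm]

lemma varIdeal_ne_top (A : Finset (Fin n)) : varIdeal K A ≠ ⊤ := by
  rw [Ideal.ne_top_iff_one, mem_varIdeal_iff]
  simp

lemma mem_varIdeal_of_X_mul_mem {b : Fin n} (hb : b ∉ A) (h : X b * f ∈ varIdeal K A) :
    f ∈ varIdeal K A := by
  rw [mem_varIdeal_iff] at h ⊢
  intro m hm
  obtain ⟨i, hi, hmi⟩ := h (Finsupp.single b 1 + m) <| by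
    rwa [mem_support_iff, coeff_X_mul, ← mem_support_iff]
  have hbi : b ≠ i := fun h => hb (h ▸ hi)
  exact ⟨i, hi, by simpa [Finsupp.single_apply, hbi] using hmi⟩

lemma monomial_mem_varIdeal {m : Fin n →₀ ℕ} (hm : ∃ i ∈ A, m i ≠ 0) (c : K) :
    monomial m c ∈ varIdeal K A :=
  mem_varIdeal_iff.mpr fun _ hm' => by
    rwa [Finset.mem_singleton.mp (support_monomial_subset hm')]

lemma inf_varIdeal_sup_varIdeal {ι : Type*} (s : Finset ι) (A : ι → Finset (Fin n))
    (B : Finset (Fin n)) :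
    (s.inf fun i => varIdeal K (A i)) ⊔ varIdeal K B = s.inf fun i => varIdeal K (A i ∪ B) := by
  refine le_antisymm (sup_le ?_ ?_) fun f hf => ?_
  · exact Finset.inf_mono_fun fun i _ => varIdeal_le_varIdeal_iff.mpr Finset.subset_union_left
  · exact Finset.le_inf fun i _ => varIdeal_le_varIdeal_iff.mpr Finset.subset_union_right
  · rw [f.as_sum]
    refine Ideal.sum_mem _ fun m hm => ?_
    by_cases hB : ∃ b ∈ B, m b ≠ 0
    · exact Ideal.mem_sup_right (monomial_mem_varIdeal hB _)
    · refine Ideal.mem_sup_left (Submodule.mem_finsetInf.mpr fun i hi => ?_)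
      obtain ⟨a, ha, hma⟩ := mem_varIdeal_iff.mp (Submodule.mem_finsetInf.mp hf i hi) m hm
      have haA : a ∈ A i := (Finset.mem_union.mp ha).resolve_right fun haB => hB ⟨a, haB, hma⟩
      exact monomial_mem_varIdeal ⟨a, haA, hma⟩ _

lemma isSMulRegular_X_quotient_varIdeal {b : Fin n} (hb : b ∉ A) :
    IsSMulRegular (MvPolynomial (Fin n) K ⧸ varIdeal K A) (X b : MvPolynomial (Fin n) K) :=
  (isSMulRegular_quotient_iff_mem_of_smul_mem _ _).mpr fun _ => mem_varIdeal_of_X_mul_mem hb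

/-- The residue field `S/(x₁, …, xₙ)` as an object of the category of `S`-modules, so that
`IsExtGrade (residueModule n K)` is the depth with respect to the graded maximal ideal. -/
noncomputable abbrev residueModule (n : ℕ) (K : Type u) [Field K] :
    ModuleCat (MvPolynomial (Fin n) K) :=
  ModuleCat.of (MvPolynomial (Fin n) K) (MvPolynomial (Fin n) K ⧸ maxIdeal n K)

lemma isExtGrade_quotient_varIdeal (A : Finset (Fin n)) :
    IsExtGrade (residueModule n K)
      (ModuleCat.of (MvPolynomial (Fin n) K) (MvPolynomial (Fin n) K ⧸ varIdeal K A)) #Aᶜ := by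
  induction hd : #Aᶜ generalizing A with
  | zero =>
    obtain rfl : A = Finset.univ := by simpa using hd
    have hnontrivial : Nontrivial (MvPolynomial (Fin n) K ⧸ maxIdeal n K) :=
      Ideal.Quotient.nontrivial_iff.mpr (varIdeal_ne_top _)
    exact isExtGrade_self_zero (X := residueModule n K) fun hzero =>
      not_nontrivial_iff_subsingleton.mpr (ModuleCat.subsingleton_of_isZero hzero) hnontrivial
  | succ d ih =>
    obtain ⟨b, hb⟩ : Aᶜ.Nonempty := Finset.card_pos.mp (by omega)
    have hcard : #(insert b A)ᶜ = d := by
      rw [Finset.compl_insert, Finset.card_erase_of_mem hb, hd, Nat.add_sub_cancel]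
    have hgrade := ih (insert b A) hcard
    rw [varIdeal_insert] at hgrade
    refine hgrade.of_exact_lsmul (isSMulRegular_X_quotient_varIdeal (Finset.mem_compl.mp hb)) ?_
      (exact_lsmul_factor_sup_span_singleton _ _) (Submodule.factor_surjective _)
    rw [Ideal.annihilator_quotient]
    exact X_mem_varIdeal_iff.mpr (Finset.mem_univ b)

lemma isExtGrade_mvPolynomial (n : ℕ) (K : Type u) [Field K] :
    IsExtGrade (residueModule n K)
      (ModuleCat.of (MvPolynomial (Fin n) K) (MvPolynomial (Fin n) K)) n := by
  simpa using (isExtGrade_quotient_varIdeal (K := K) (∅ : Finset (Fin n))).of_iso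
    (Submodule.quotEquivOfEqBot _ varIdeal_empty).toModuleIso

lemma isExtGrade_varIdeal (hA : A.Nonempty) :
    IsExtGrade (residueModule n K) (ModuleCat.of (MvPolynomial (Fin n) K) (varIdeal K A))
      (#Aᶜ + 1) := by
  have hlt : #Aᶜ < n := by simpa using (Finset.card_compl_lt_iff_nonempty A).mpr hA
  exact .of_exact (Submodule.injective_subtype _) (LinearMap.exact_subtype_mkQ _)
    (Submodule.mkQ_surjective _)
    (fun i hi => (isExtGrade_mvPolynomial n K).subsingleton (hi.trans_lt hlt))
    (isExtGrade_quotient_varIdeal A)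

end VarIdeal

section Irredundant

variable {K : Type u} [Field K] {n : ℕ} {ι : Type*} {s : Finset ι} {A : ι → Finset (Fin n)}
  {x : ι → Fin n}

lemma card_add_card_compl_sup_union_le {B : Finset (Fin n)}
    (hx : ∀ i ∈ s, ∀ j ∈ s, x i ∈ A j ↔ i = j) (hB : ∀ i ∈ s, x i ∉ B) :
    #s + #(s.sup A ∪ B)ᶜ ≤ #Bᶜ := by
  classical
  have hinj : Set.InjOn x s := fun i hi j hj hij =>
    (hx i hi j hj).mp (hij ▸ (hx j hj j hj).mpr rfl)
  have hdisj : Disjoint (s.image x) (s.sup A ∪ B)ᶜ := by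
    refine Finset.disjoint_left.mpr fun a ha => ?_
    obtain ⟨i, hi, rfl⟩ := Finset.mem_image.mp ha
    have hmem : x i ∈ s.sup A := Finset.mem_sup.mpr ⟨i, hi, (hx i hi i hi).mpr rfl⟩
    simpa only [Finset.mem_compl, not_not] using Finset.mem_union_left B hmem
  rw [← Finset.card_image_of_injOn hinj, ← Finset.card_union_of_disjoint hdisj]
  refine Finset.card_le_card (Finset.union_subset ?_ ?_)
  · simpa [Finset.image_subset_iff] using hB
  · exact Finset.compl_subset_compl.mpr Finset.subset_union_right

lemma isExtGrade_inf_varIdeal (hs : s.Nonempty) (hx : ∀ i ∈ s, ∀ j ∈ s, x i ∈ A j ↔ i = j) :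
    IsExtGrade (residueModule n K)
      (ModuleCat.of (MvPolynomial (Fin n) K) ↥(s.inf fun i => varIdeal K (A i)))
      (#s + #(s.sup A)ᶜ) := by
  induction hs using Finset.Nonempty.cons_induction generalizing A with
  | singleton i =>
    have hi : x i ∈ A i := by simpa using hx i
    rw [Finset.inf_singleton, Finset.sup_singleton, Finset.card_singleton, add_comm]
    exact isExtGrade_varIdeal ⟨_, hi⟩
  | cons i s his hs ih =>
    have hxs : ∀ j ∈ s, ∀ k ∈ s, x j ∈ A k ↔ j = k := fun j hj k hk =>
      hx j (Finset.mem_cons_of_mem hj) k (Finset.mem_cons_of_mem hk)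
    have hxi : x i ∈ A i := (hx i (Finset.mem_cons_self i s) i (Finset.mem_cons_self i s)).mpr rfl
    have hxi_notMem : x i ∉ s.sup A := fun hmem => by
      obtain ⟨j, hj, hij⟩ := Finset.mem_sup.mp hmem
      exact his <| (hx i (Finset.mem_cons_self i s) j (Finset.mem_cons_of_mem hj)).mp hij ▸ hj
    have hxs_notMem (j) (hj : j ∈ s) : x j ∉ A i := fun hmem =>
      his <| (hx j (Finset.mem_cons_of_mem hj) i (Finset.mem_cons_self i s)).mp hmem ▸ hj
    have hsup := ih (A := fun j => A j ∪ A i) fun j hj k hk => by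
      rw [Finset.mem_union, or_iff_left (hxs_notMem j hj), hxs j hj k hk]
    have hunion : (s.sup fun j => A j ∪ A i) = s.sup A ∪ A i :=
      Finset.sup_sup.trans (congrArg (s.sup A ⊔ ·) (Finset.sup_const hs (A i)))
    rw [← inf_varIdeal_sup_varIdeal, hunion] at hsup
    have hlt : #(s.sup A ∪ A i)ᶜ < #(s.sup A)ᶜ := Finset.card_lt_card <|
      Finset.compl_ssubset_compl.mpr <| Finset.ssubset_iff_subset_ne.mpr
        ⟨Finset.subset_union_left, fun h => hxi_notMem (h ▸ Finset.mem_union_right _ hxi)⟩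
    have hle := card_add_card_compl_sup_union_le hxs hxs_notMem
    have hgrade := (ih hxs).inf (isExtGrade_varIdeal ⟨x i, hxi⟩) hsup (by omega) (by omega)
    rw [Finset.inf_cons, inf_comm, Finset.sup_cons, sup_comm, Finset.card_cons, add_right_comm]
    exact hgrade

lemma inf_varIdeal_ne_bot (hx : ∀ i ∈ s, x i ∈ A i) : (s.inf fun i => varIdeal K (A i)) ≠ ⊥ := by
  refine Submodule.ne_bot_iff _ |>.mpr ⟨∏ i ∈ s, X (x i), ?_, ?_⟩
  · exact Submodule.mem_finsetInf.mpr fun i hi =>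
      Ideal.mem_of_dvd _ (Finset.dvd_prod_of_mem _ hi) (X_mem_varIdeal_iff.mpr (hx i hi))
  · exact Finset.prod_ne_zero_iff.mpr fun i _ => X_ne_zero (x i)

lemma moduleDepth_inf_varIdeal (hs : s.Nonempty) (hx : ∀ i ∈ s, ∀ j ∈ s, x i ∈ A j ↔ i = j) :
    moduleDepth (MvPolynomial (Fin n) K) (maxIdeal n K) ↥(s.inf fun i => varIdeal K (A i)) =
      #s + #(s.sup A)ᶜ := by
  have : Nontrivial ↥(s.inf fun i => varIdeal K (A i)) :=
    Submodule.nontrivial_iff_ne_bot.mpr (inf_varIdeal_ne_bot fun i hi => (hx i hi i hi).mpr rfl)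
  exact (isExtGrade_inf_varIdeal hs hx).moduleDepth_eq (ideal_smul_top_lt_top (varIdeal_ne_top _))

end Irredundant

theorem depth_inter_three_primes_generic_general {K : Type*} [Field K] {n : ℕ} {ι : Type*}
    [Fintype ι] [Nonempty ι] (A : ι → Finset (Fin n))
    (hA : ∀ i, ¬varIdeal K (A i) ≤ ⨆ j ≠ i, varIdeal K (A j)) :
    moduleDepth (MvPolynomial (Fin n) K) (maxIdeal n K) ↥(⨅ i, varIdeal K (A i)) =
      Fintype.card ι + #(Finset.univ.sup A)ᶜ := by
  simp only [varIdeal_le_iff, not_forall] at hA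
  choose x hxA hx using hA
  rw [← Finset.inf_univ_eq_iInf]
  refine moduleDepth_inf_varIdeal (x := x) Finset.univ_nonempty fun i _ j _ =>
    ⟨fun hij => ?_, fun hij => hij ▸ hxA i⟩
  by_contra hne
  exact hx i (le_iSup₂ (f := fun k (_ : k ≠ i) => varIdeal K (A k)) j (Ne.symm hne)
    (X_mem_varIdeal_iff.mpr hij))

/-- for three pairwise incomparable nonzero monomial primes with
`P₁+P₂+P₃ = (x₁,…,xₙ)` and no `P_i` contained in the sum of the other two,
`depth (P₁ ∩ P₂ ∩ P₃) = 3`. -/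
theorem depth_inter_three_primes_generic {K : Type*} [Field K] (n : ℕ)
    (A1 A2 A3 : Finset (Fin n)) :
    letI P1 : Ideal (MvPolynomial (Fin n) K) := varIdeal K A1
    letI P2 : Ideal (MvPolynomial (Fin n) K) := varIdeal K A2
    letI P3 : Ideal (MvPolynomial (Fin n) K) := varIdeal K A3
    P1 ≠ ⊥ → P2 ≠ ⊥ → P3 ≠ ⊥ →
    ¬P1 ≤ P2 → ¬P2 ≤ P1 → ¬P1 ≤ P3 → ¬P3 ≤ P1 → ¬P2 ≤ P3 → ¬P3 ≤ P2 →
    P1 ⊔ P2 ⊔ P3 = maxIdeal n K →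
    ¬P1 ≤ P2 ⊔ P3 → ¬P2 ≤ P1 ⊔ P3 → ¬P3 ≤ P1 ⊔ P2 →
    moduleDepth (MvPolynomial (Fin n) K) (maxIdeal n K) ↥(P1 ⊓ P2 ⊓ P3) = 3 := by
  intro _ _ _ _ _ _ _ _ _ hsum h1 h2 h3
  have hsup : Finset.univ.sup ![A1, A2, A3] = Finset.univ := by
    rw [← varIdeal_union, ← varIdeal_union, maxIdeal] at hsum
    simpa [Fin.univ_succ, Finset.union_assoc] using
      Finset.univ_subset_iff.mp (varIdeal_le_varIdeal_iff.mp hsum.ge)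
  have hinf : ⨅ i, varIdeal K (![A1, A2, A3] i) =
      varIdeal K A1 ⊓ varIdeal K A2 ⊓ varIdeal K A3 := by
    simp [← Finset.inf_univ_eq_iInf, Fin.univ_succ, inf_assoc]
  have hdepth := depth_inter_three_primes_generic_general (K := K) ![A1, A2, A3] (by
    simpa [Fin.forall_fin_succ, iSup_fin_three] using ⟨h1, h2, h3⟩)
  rwa [hinf, hsup, Finset.compl_univ, Finset.card_empty] at hdepth
end
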